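/- arXiv:2506.08816 — 4 statements merged into one kernel-verified Lean document; each statement's English description precedes it below -/
import Mathlib

section
/- Let d ∈ ℕ, q ∈ (1,∞), and s ∈ Int(S_d), and let p be the conjugate exponent with 1/p + 1/q = 1. Then, as b → 0, the squared L^q norm of the Dirichlet kernel satisfies ‖κ_{s,b}‖_q² = (∫_{S_d} κ_{s,b}^q(x) dx)^{2/q} = [b^{−d/p} ψ^{2/p}(s) / (2^{−d/p} q^{d/q})] (1 + O_s(b)). -/
open MeasureTheory Filter Asymptotics Real Topology

noncomputable section

/-- The `d`-dimensional simplex `S_d = {s ∈ [0,1]^d : ‖s‖₁ ≤ 1}`. -/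
def Sd (d : ℕ) : Set (Fin d → ℝ) :=
  {s | (∀ i, s i ∈ Set.Icc (0 : ℝ) 1) ∧ ∑ i, |s i| ≤ 1}

/-- The interior of the simplex, `Int(S_d) = {s ∈ (0,1)^d : ‖s‖₁ < 1}`. -/
def SdInt (d : ℕ) : Set (Fin d → ℝ) :=
  {s | (∀ i, s i ∈ Set.Ioo (0 : ℝ) 1) ∧ ∑ i, |s i| < 1}

/-- The Dirichlet(u, v) density on the simplex, evaluated at `x`. -/
def dirK (d : ℕ) (u : Fin d → ℝ) (v : ℝ) (x : Fin d → ℝ) : ℝ :=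
  (Real.Gamma (∑ i, u i + v) / (Real.Gamma v * ∏ i, Real.Gamma (u i))) *
    (1 - ∑ i, x i) ^ (v - 1) * ∏ i, (x i) ^ (u i - 1)

/-- The Dirichlet kernel `κ_{s,b} = K_{s/b+1, (1-‖s‖₁)/b+1}`. -/
def kappa (d : ℕ) (s : Fin d → ℝ) (b : ℝ) (x : Fin d → ℝ) : ℝ :=
  dirK d (fun i => s i / b + 1) ((1 - ∑ i, s i) / b + 1) x

/-- `ψ(s) = (4π)^{-d/2} / ((1-‖s‖₁)^{1/2} ∏ s_i^{1/2})`. -/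
def psiFun (d : ℕ) (s : Fin d → ℝ) : ℝ :=
  (4 * π) ^ (-(d : ℝ) / 2) /
    ((1 - ∑ i, s i) ^ ((1 : ℝ) / 2) * ∏ i, (s i) ^ ((1 : ℝ) / 2))

/-- The Dirichlet kernel density estimator `f̂_{n,b}(s)`. -/
def fhat {Ω : Type*} (d n : ℕ) (b : ℝ) (X : ℕ → Ω → (Fin d → ℝ))
    (s : Fin d → ℝ) (ω : Ω) : ℝ :=
  (n : ℝ)⁻¹ * ∑ i ∈ Finset.Icc 1 n, kappa d s b (X i ω)

/-- The strong mixing (α-mixing) coefficient of the sequence `X`. -/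
def alphaMix {Ω : Type*} [MeasurableSpace Ω] (P : Measure Ω)
    {d : ℕ} (X : ℕ → Ω → (Fin d → ℝ)) (m : ℕ) : ℝ :=
  sSup {r : ℝ | ∃ k : ℕ, 1 ≤ k ∧ ∃ A B : Set Ω,
    MeasurableSet[⨆ i ∈ Set.Icc 1 k, MeasurableSpace.comap (X i) inferInstance] A ∧
    MeasurableSet[⨆ i ∈ Set.Ici (k + m), MeasurableSpace.comap (X i) inferInstance] B ∧
    r = |(P (A ∩ B)).toReal - (P A).toReal * (P B).toReal|}

/-- Strict stationarity of the sequence `X` (indexed from 1). -/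
def IsStrictlyStationary {Ω : Type*} [MeasurableSpace Ω] (P : Measure Ω)
    {d : ℕ} (X : ℕ → Ω → (Fin d → ℝ)) : Prop :=
  ∀ k n : ℕ,
    Measure.map (fun ω => fun t : Fin n => X (t.1 + 1 + k) ω) P =
      Measure.map (fun ω => fun t : Fin n => X (t.1 + 1) ω) P

/-- Covariance of two real random variables. -/
def cov {Ω : Type*} [MeasurableSpace Ω] (P : Measure Ω) (Y Z : Ω → ℝ) : ℝ :=
  ∫ ω, Y ω * Z ω ∂P - (∫ ω, Y ω ∂P) * (∫ ω, Z ω ∂P)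

/-- The bias functional `g(s)` from Theorem MSE. -/
def gfun (d : ℕ) (f : (Fin d → ℝ) → ℝ) (s : Fin d → ℝ) : ℝ :=
  (∑ i, (1 - ((d : ℝ) + 1) * s i) * fderiv ℝ f s (Pi.single i 1)) +
    (1 / 2) * ∑ i, ∑ j, s i * ((if i = j then (1 : ℝ) else 0) - s j) *
      fderiv ℝ (fun t => fderiv ℝ f t (Pi.single i 1)) s (Pi.single j 1)

/-- The centered kernel variable `Ξ_{i,n}(s)`. -/
def Xi {Ω : Type*} [MeasurableSpace Ω] (P : Measure Ω) {d : ℕ}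
    (X : ℕ → Ω → (Fin d → ℝ)) (s : Fin d → ℝ) (b : ℝ) (i : ℕ) (ω : Ω) : ℝ :=
  kappa d s b (X i ω) - ∫ ω', kappa d s b (X i ω') ∂P

/-- The `j`-th big block of indices `I_j`. -/
def bigBlock (pn qn j : ℕ) : Finset ℕ :=
  Finset.Icc ((j - 1) * (pn + qn) + 1) ((j - 1) * (pn + qn) + pn)

/-- The `j`-th small block of indices `J_j`. -/
def smallBlock (pn qn j : ℕ) : Finset ℕ :=
  Finset.Icc ((j - 1) * (pn + qn) + pn + 1) (j * (pn + qn))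

/-- Assumption (A2): pairwise joint densities exist and the local dependence
functions `h_{i,j} = f_{X_i,X_j} - f_{X_i} f_{X_j}` have uniformly bounded `L^p` norms. -/
def AssumpA2 {Ω : Type*} [MeasurableSpace Ω] (P : Measure Ω) {d : ℕ}
    (X : ℕ → Ω → (Fin d → ℝ)) (f : (Fin d → ℝ) → ℝ) (p : ℝ) : Prop :=
  ∃ fpair : ℕ → ℕ → ((Fin d → ℝ) × (Fin d → ℝ)) → ℝ,
    (∀ i j : ℕ, 1 ≤ i → 1 ≤ j → i ≠ j →
      Measure.map (fun ω => (X i ω, X j ω)) P =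
        volume.withDensity (fun z => ENNReal.ofReal (fpair i j z))) ∧
    (∀ i j : ℕ, 1 ≤ i → 1 ≤ j → i ≠ j →
      Integrable (fun z => |fpair i j z - f z.1 * f z.2| ^ p)
        (volume.restrict (Sd d ×ˢ Sd d))) ∧
    ∃ C : ℝ, ∀ i j : ℕ, 1 ≤ i → 1 ≤ j → i ≠ j →
      (∫ z in Sd d ×ˢ Sd d, |fpair i j z - f z.1 * f z.2| ^ p) ^ (1 / p) ≤ C

/-- Stirling ratio `R(z) = √(2π) e^{-z} z^{z+1/2} / Γ(z+1)`. -/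
def Rfun (z : ℝ) : ℝ :=
  Real.sqrt (2 * π) * Real.exp (-z) * z ^ (z + 1 / 2) / Real.Gamma (z + 1)

end

/-!
On the simplex `κ_{s,b}^q` is a constant multiple of `κ_{s,b/q}`. Dirichlet densities integrate
to `1`, as a convolution of gamma densities is again one, so `∫ κ_{s,b}^q = C(b)^q / C(b/q)` with
`C(b)` the normalising constant of `κ_{s,b}`. Stirling's formula with relative error `O(1/z)`
gives `C(b) = ψ(s) (b/2)^{-d/2} e^{H(s)/b} (1 + O(b))`, where `H(s)` is the entropy of
`(1 - ‖s‖₁, s₁, …, s_d)`, and the factor `e^{H(s)/b}` cancels in the quotient.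
-/

theorem rpow_div_rpow_div_eq_exp {A A' B B' q r : ℝ} (hA : 0 < A) (hA' : 0 < A') (hB : 0 < B)
    (hB' : 0 < B') :
    (A ^ q / A') ^ r / (B ^ q / B') ^ r =
      exp (r * (q * (log A - log B) - (log A' - log B'))) := by
  rw [← exp_log (show 0 < (A ^ q / A') ^ r / (B ^ q / B') ^ r by positivity),
    log_div (by positivity) (by positivity), log_rpow (by positivity), log_rpow (by positivity),
    log_div (by positivity) hA'.ne', log_div (by positivity) hB'.ne', log_rpow hA, log_rpow hB]
  ring_nf

theorem isBigO_exp_sub_one {α : Type*} {l : Filter α} {f : α → ℝ} (hf : Tendsto f l (𝓝 0)) :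
    (fun x ↦ exp (f x) - 1) =O[l] f := by
  simpa [Function.comp_def] using
    (differentiableAt_exp (x := (0 : ℝ))).isBigO_sub.comp_tendsto hf

theorem isBigO_log_one_add_const_mul (c : ℝ) :
    (fun b : ℝ ↦ log (1 + c * b)) =O[𝓝 0] fun b ↦ b := by
  have hdiff : DifferentiableAt ℝ (fun b : ℝ ↦ log (1 + c * b)) 0 :=
    DifferentiableAt.log (by fun_prop) (by simp)
  simpa using hdiff.isBigO_sub

theorem isBigO_comp_div_const {f : ℝ → ℝ} (hf : f =O[𝓝[>] 0] fun b ↦ b) {q : ℝ} (hq : 0 < q) :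
    (fun b ↦ f (b / q)) =O[𝓝[>] 0] fun b ↦ b := by
  have hlim : Tendsto (fun b : ℝ ↦ b / q) (𝓝[>] 0) (𝓝[>] 0) := by
    refine tendsto_nhdsWithin_iff.2 ⟨?_, ?_⟩
    · exact ((continuous_id.div_const q).tendsto' 0 0 (zero_div q)).mono_left nhdsWithin_le_nhds
    · filter_upwards [self_mem_nhdsWithin] with b hb using div_pos hb hq
  refine (hf.comp_tendsto hlim).trans ?_
  simpa only [Function.comp_def, div_eq_inv_mul] using
    isBigO_const_mul_self q⁻¹ (fun b : ℝ ↦ b) (𝓝[>] 0)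

section Stirling

variable {z : ℝ}

theorem log_le_half_sub_inv {x : ℝ} (hx : 1 ≤ x) : log x ≤ (x - x⁻¹) / 2 := by
  rw [← sinh_log (one_pos.trans_le hx)]
  exact self_le_sinh_iff.2 (log_nonneg hx)

theorem one_le_add_half_mul_log_one_add_inv (hz : 0 < z) : 1 ≤ (z + 1 / 2) * log (1 + z⁻¹) := by
  calc 1 = (z + 1 / 2) * (2 * z⁻¹ / (z⁻¹ + 2)) := by field_simp; ring
    _ ≤ (z + 1 / 2) * log (1 + z⁻¹) := by
      gcongr
      exact le_log_one_add_of_nonneg (inv_nonneg.2 hz.le)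

theorem add_half_mul_log_one_add_inv_le (hz : 0 < z) :
    (z + 1 / 2) * log (1 + z⁻¹) ≤ 1 + (z⁻¹ - (z + 1)⁻¹) / 4 := by
  calc (z + 1 / 2) * log (1 + z⁻¹)
      ≤ (z + 1 / 2) * ((1 + z⁻¹ - (1 + z⁻¹)⁻¹) / 2) := by
        gcongr
        exact log_le_half_sub_inv (le_add_of_nonneg_right (inv_nonneg.2 hz.le))
    _ = 1 + (z⁻¹ - (z + 1)⁻¹) / 4 := by
      have : 1 + z⁻¹ = (z + 1) / z := by field_simp
      rw [this]; field_simp; ring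

theorem log_Gamma_add_natCast (hz : 0 < z) (n : ℕ) :
    log (Gamma (z + n)) = log (Gamma z) + ∑ m ∈ Finset.range n, log (z + m) := by
  refine BohrMollerup.f_add_nat_eq (f := log ∘ Gamma) (fun {y} hy ↦ ?_) hz n
  simp only [Function.comp_apply]
  rw [Gamma_add_one hy.ne', log_mul hy.ne' (Gamma_pos_of_pos hy).ne', add_comm]

theorem log_Gamma_add_one (hz : 0 < z) :
    log (Gamma (z + 1)) = (z + 1 / 2) * log z - z + log (2 * π) / 2 - log (Rfun z) := by
  have hG : 0 < Gamma (z + 1) := Gamma_pos_of_pos (by positivity)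
  have hsqrt : √(2 * π) ≠ 0 := by positivity
  rw [Rfun, log_div (by positivity) hG.ne',
    log_mul (mul_ne_zero hsqrt (exp_ne_zero _)) (by positivity),
    log_mul hsqrt (exp_ne_zero _), log_exp, log_rpow hz, log_sqrt (by positivity)]
  ring

theorem log_rfun_add_one (hz : 0 < z) :
    log (Rfun (z + 1)) = log (Rfun z) + ((z + 1 / 2) * log (1 + z⁻¹) - 1) := by
  have hG := log_Gamma_add_natCast (z := z + 1) (by positivity) 1
  have hlog : log (1 + z⁻¹) = log (z + 1) - log z := by
    rw [← log_div (by positivity) hz.ne']; congr 1; field_simp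
  simp only [Nat.cast_one, Finset.sum_range_one, Nat.cast_zero, add_zero] at hG
  rw [log_Gamma_add_one hz, log_Gamma_add_one (by positivity)] at hG
  rw [hlog]
  linarith

theorem log_rfun_add_natCast (hz : 0 < z) {n : ℕ} (hn : n ≠ 0) :
    log (Rfun (z + n)) = (BohrMollerup.logGammaSeq z n - log (Gamma z)) -
      (log (Stirling.stirlingSeq n) - log √π) + (n + z + 1 / 2) * log (1 + z / n) - z := by
  have hn₀ : (0 : ℝ) < n := by positivity
  have hG : log (Gamma (z + n + 1)) =
      log (Gamma z) + ∑ m ∈ Finset.range (n + 1), log (z + m) := by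
    rw [← log_Gamma_add_natCast hz, Nat.cast_add_one, add_assoc]
  have hlog : log (1 + z / n) = log (z + n) - log n := by
    rw [← log_div (by positivity) hn₀.ne']; congr 1; field_simp; ring
  rw [log_Gamma_add_one (by positivity)] at hG
  rw [BohrMollerup.logGammaSeq, Stirling.log_stirlingSeq_formula, hlog,
    log_mul two_ne_zero hn₀.ne', log_div hn₀.ne' (exp_ne_zero 1), log_exp,
    log_sqrt pi_pos.le]
  rw [log_mul two_ne_zero pi_ne_zero] at hG
  linarith

theorem tendsto_log_rfun_add_natCast (hz : 0 < z) :
    Tendsto (fun n : ℕ ↦ log (Rfun (z + n))) atTop (𝓝 0) := by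
  have hGamma := (BohrMollerup.tendsto_log_gamma hz).sub_const (log (Gamma z))
  have hStirling := (Stirling.tendsto_stirlingSeq_sqrt_pi.log (by positivity)).sub_const (log √π)
  have hmul : Tendsto (fun n : ℕ ↦ (n : ℝ) * log (1 + z / n)) atTop (𝓝 z) :=
    (tendsto_mul_log_one_add_div_atTop z).comp tendsto_natCast_atTop_atTop
  have hlog : Tendsto (fun n : ℕ ↦ log (1 + z / n)) atTop (𝓝 0) := by
    simpa using ((tendsto_const_div_atTop_nhds_zero_nat z).const_add 1).log (by norm_num)
  have hlim := ((hGamma.sub hStirling).add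
    (hmul.add (hlog.const_mul (z + 1 / 2)))).sub_const z
  simp only [sub_self, mul_zero, add_zero, zero_add] at hlim
  refine hlim.congr' ?_
  filter_upwards [eventually_ne_atTop 0] with n hn
  rw [log_rfun_add_natCast hz hn]
  ring

theorem log_rfun_nonpos (hz : 0 < z) : log (Rfun z) ≤ 0 := by
  have hmono : Monotone fun n : ℕ ↦ log (Rfun (z + n)) := monotone_nat_of_le_succ fun n ↦ by
    have hzn : 0 < z + n := by positivity
    rw [Nat.cast_add_one, ← add_assoc, log_rfun_add_one hzn]
    linarith [one_le_add_half_mul_log_one_add_inv hzn]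
  simpa using hmono.ge_of_tendsto (tendsto_log_rfun_add_natCast hz) 0

theorem neg_inv_div_four_le_log_rfun (hz : 0 < z) : -(z⁻¹ / 4) ≤ log (Rfun z) := by
  have hanti : Antitone fun n : ℕ ↦ log (Rfun (z + n)) + (z + n)⁻¹ / 4 :=
    antitone_nat_of_succ_le fun n ↦ by
      have hzn : 0 < z + n := by positivity
      rw [Nat.cast_add_one, ← add_assoc, log_rfun_add_one hzn]
      linarith [add_half_mul_log_one_add_inv_le hzn]
  have hinv : Tendsto (fun n : ℕ ↦ (z + n)⁻¹ / 4) atTop (𝓝 0) := by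
    simpa using (tendsto_inv_atTop_zero.comp
      (tendsto_atTop_add_const_left atTop z tendsto_natCast_atTop_atTop)).div_const 4
  have hle := hanti.le_of_tendsto ((tendsto_log_rfun_add_natCast hz).add hinv) 0
  simp only [Nat.cast_zero, add_zero] at hle
  linarith

theorem isBigO_log_rfun_div {c : ℝ} (hc : 0 < c) :
    (fun b : ℝ ↦ log (Rfun (c / b))) =O[𝓝[>] 0] fun b ↦ b := by
  refine .of_bound (c⁻¹ / 4) ?_
  filter_upwards [self_mem_nhdsWithin] with b (hb : 0 < b)
  rw [norm_eq_abs, norm_eq_abs, abs_of_pos hb, abs_of_nonpos (log_rfun_nonpos (by positivity))]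
  calc -log (Rfun (c / b)) ≤ (c / b)⁻¹ / 4 :=
        neg_le.1 (neg_inv_div_four_le_log_rfun (by positivity))
    _ = c⁻¹ / 4 * b := by field_simp

end Stirling

theorem mem_sd_iff {d : ℕ} {x : Fin d → ℝ} : x ∈ Sd d ↔ (∀ i, 0 ≤ x i) ∧ ∑ i, x i ≤ 1 := by
  constructor
  · rintro ⟨hx, hsum⟩
    exact ⟨fun i ↦ (hx i).1, (Finset.sum_le_sum fun i _ ↦ le_abs_self (x i)).trans hsum⟩
  · rintro ⟨hx, hsum⟩
    refine ⟨fun i ↦ ⟨hx i, ?_⟩, by simpa only [abs_of_nonneg (hx _)] using hsum⟩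
    exact (Finset.single_le_sum (fun j _ ↦ hx j) (Finset.mem_univ i)).trans hsum

theorem measurableSet_sd (d : ℕ) : MeasurableSet (Sd d) := by
  have hSd : Sd d = (⋂ i, {x | 0 ≤ x i}) ∩ {x | ∑ i, x i ≤ 1} := by
    ext x
    simp only [mem_sd_iff, Set.mem_inter_iff, Set.mem_iInter, Set.mem_ofPred_eq]
  rw [hSd]
  exact (MeasurableSet.iInter fun i ↦ measurableSet_le measurable_const (by fun_prop)).inter
    (measurableSet_le (by fun_prop) measurable_const)

theorem pos_of_mem_sdInt {d : ℕ} {s : Fin d → ℝ} (hs : s ∈ SdInt d) (i : Fin d) : 0 < s i :=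
  (hs.1 i).1

theorem one_sub_sum_pos_of_mem_sdInt {d : ℕ} {s : Fin d → ℝ} (hs : s ∈ SdInt d) :
    0 < 1 - ∑ i, s i :=
  sub_pos.2 ((Finset.sum_le_sum fun i _ ↦ le_abs_self (s i)).trans_lt hs.2)

section DirichletIntegral

open ProbabilityTheory

variable {r : ℝ}

@[fun_prop]
theorem measurable_gammaPDF (a r : ℝ) : Measurable (gammaPDF a r) :=
  (measurable_gammaPDFReal a r).ennreal_ofReal

theorem measurable_betaPDF (a c : ℝ) : Measurable (betaPDF a c) :=
  (measurable_betaPDFReal a c).ennreal_ofReal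

theorem gammaPDF_mul_gammaPDF_eq_mul_betaPDF {a c t y : ℝ} (ha : 0 < a) (hc : 0 < c) (hr : 0 < r)
    (ht : 0 < t) (hy₀ : y ≠ 0) (hy₁ : y ≠ 1) :
    gammaPDF a r (t * y) * gammaPDF c r (t - t * y) =
      ENNReal.ofReal t⁻¹ * gammaPDF (a + c) r t * betaPDF a c y := by
  have hsub : t - t * y = t * (1 - y) := by ring
  rw [hsub]
  rcases lt_or_gt_of_ne hy₀ with hneg | hpos
  · rw [gammaPDF_of_neg (mul_neg_of_pos_of_neg ht hneg), betaPDF_eq_zero_of_nonpos hneg.le,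
      zero_mul, mul_zero]
  rcases lt_or_gt_of_ne hy₁ with hlt | hgt
  · have hpos' : 0 < 1 - y := sub_pos.2 hlt
    have hexp : exp (-(r * t)) = exp (-(r * (t * y))) * exp (-(r * (t * (1 - y)))) := by
      rw [← exp_add]; ring_nf
    have htpow : t ^ (a + c - 1) = t * (t ^ (a - 1) * t ^ (c - 1)) := by
      rw [show a + c - 1 = 1 + ((a - 1) + (c - 1)) by ring, rpow_add ht, rpow_add ht, rpow_one]
    rw [gammaPDF_of_nonneg (by positivity), gammaPDF_of_nonneg (by positivity),
      gammaPDF_of_nonneg ht.le, betaPDF_of_pos_lt_one hpos hlt,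
      ← ENNReal.ofReal_mul (by positivity), ← ENNReal.ofReal_mul (by positivity),
      ← ENNReal.ofReal_mul (by positivity), beta, mul_rpow ht.le hpos.le, mul_rpow ht.le hpos'.le,
      rpow_add hr, hexp, htpow]
    congr 1
    field_simp
  · rw [gammaPDF_of_neg (mul_neg_of_pos_of_neg ht (sub_neg.2 hgt)),
      betaPDF_eq_zero_of_one_le hgt.le, mul_zero, mul_zero]

theorem lintegral_gammaPDF_mul_gammaPDF_sub {a c t : ℝ} (ha : 0 < a) (hc : 0 < c) (hr : 0 < r)
    (ht : t ≠ 0) : ∫⁻ x, gammaPDF a r x * gammaPDF c r (t - x) = gammaPDF (a + c) r t := by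
  rcases lt_or_gt_of_ne ht with hneg | hpos
  · have hzero (x : ℝ) : gammaPDF a r x * gammaPDF c r (t - x) = 0 := by
      rcases lt_or_ge x 0 with hx | hx
      · rw [gammaPDF_of_neg hx, zero_mul]
      · rw [gammaPDF_of_neg (by linarith : t - x < 0), mul_zero]
    simp only [hzero, lintegral_zero, gammaPDF_of_neg hneg]
  · have hscale : ∀ᵐ y : ℝ, gammaPDF a r (t * y) * gammaPDF c r (t - t * y) =
        ENNReal.ofReal t⁻¹ * gammaPDF (a + c) r t * betaPDF a c y := by
      filter_upwards [Measure.ae_ne volume 0, Measure.ae_ne volume 1] with y hy₀ hy₁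
      exact gammaPDF_mul_gammaPDF_eq_mul_betaPDF ha hc hr hpos hy₀ hy₁
    rw [← Real.smul_map_volume_mul_left ht, lintegral_smul_measure,
      lintegral_map (by fun_prop) (by fun_prop), lintegral_congr_ae hscale,
      lintegral_const_mul _ (measurable_betaPDF a c),
      lintegral_betaPDF_eq_one ha hc, mul_one, smul_eq_mul, ← mul_assoc,
      ← ENNReal.ofReal_mul (abs_nonneg t), abs_of_pos hpos, mul_inv_cancel₀ ht,
      ENNReal.ofReal_one, one_mul]

-- Induction on the dimension: integrating out `x 0` last is one more convolution.
theorem lintegral_gammaPDF_sub_sum_mul_prod_gammaPDF {d : ℕ} {u : Fin d → ℝ} {v t : ℝ}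
    (hu : ∀ i, 0 < u i) (hv : 0 < v) (hr : 0 < r) (ht : t ≠ 0) :
    ∫⁻ x : Fin d → ℝ, gammaPDF v r (t - ∑ i, x i) * ∏ i, gammaPDF (u i) r (x i) =
      gammaPDF (∑ i, u i + v) r t := by
  induction d generalizing t with
  | zero => simp [lintegral_unique, volume_pi]
  | succ n ih =>
    have hfiber : ∀ᵐ x : ℝ, ∫⁻ y : Fin n → ℝ, gammaPDF v r (t - (x + ∑ i, y i)) *
        (gammaPDF (u 0) r x * ∏ i, gammaPDF (u i.succ) r (y i)) =
          gammaPDF (u 0) r x * gammaPDF (∑ i : Fin n, u i.succ + v) r (t - x) := by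
      filter_upwards [Measure.ae_ne volume t] with x hx
      rw [← ih (fun i ↦ hu i.succ) (sub_ne_zero.2 hx.symm), ← lintegral_const_mul _ (by fun_prop)]
      simp only [sub_sub, mul_left_comm]
    have hsum : 0 ≤ ∑ i : Fin n, u i.succ := Finset.sum_nonneg fun i _ ↦ (hu i.succ).le
    have hsplit := (volume_preserving_piFinSuccAbove (fun _ : Fin (n + 1) ↦ ℝ) 0).symm
    rw [← hsplit.lintegral_comp (by fun_prop), Measure.volume_eq_prod,
      lintegral_prod _ (by fun_prop)]
    simp only [MeasurableEquiv.piFinSuccAbove_symm_apply, Fin.insertNthEquiv_apply,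
      Fin.insertNth_zero, Fin.sum_univ_succ, Fin.prod_univ_succ, Fin.cons_zero, Fin.cons_succ]
    refine (lintegral_congr_ae hfiber).trans ?_
    rw [lintegral_gammaPDF_mul_gammaPDF_sub (hu 0) (by positivity) hr ht, add_assoc]

end DirichletIntegral

section DirichletDensity

open ProbabilityTheory

variable {d : ℕ} {u : Fin d → ℝ} {v : ℝ} {x : Fin d → ℝ}

/-- The normalising constant `Γ(‖u‖₁ + v) / (Γ(v) ∏ Γ(u i))` of the Dirichlet(u, v) density. -/
noncomputable def dirichletConst (u : Fin d → ℝ) (v : ℝ) : ℝ :=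
  Gamma (∑ i, u i + v) / (Gamma v * ∏ i, Gamma (u i))

theorem dirK_eq_dirichletConst_mul (u : Fin d → ℝ) (v : ℝ) (x : Fin d → ℝ) :
    dirK d u v x = dirichletConst u v * ((1 - ∑ i, x i) ^ (v - 1) * ∏ i, x i ^ (u i - 1)) :=
  mul_assoc _ _ _

theorem dirichletConst_pos (hu : ∀ i, 0 < u i) (hv : 0 < v) : 0 < dirichletConst u v :=
  have hsum : 0 ≤ ∑ i, u i := Finset.sum_nonneg fun i _ ↦ (hu i).le
  div_pos (Gamma_pos_of_pos (by positivity))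
    (mul_pos (Gamma_pos_of_pos hv) (Finset.prod_pos fun i _ ↦ Gamma_pos_of_pos (hu i)))

theorem one_sub_sum_rpow_mul_prod_rpow_nonneg (hx : x ∈ Sd d) (w : Fin d → ℝ) (a : ℝ) :
    0 ≤ (1 - ∑ i, x i) ^ a * ∏ i, x i ^ w i := by
  obtain ⟨hx₀, hx₁⟩ := mem_sd_iff.1 hx
  exact mul_nonneg (rpow_nonneg (sub_nonneg.2 hx₁) _)
    (Finset.prod_nonneg fun i _ ↦ rpow_nonneg (hx₀ i) _)

theorem dirK_nonneg (hu : ∀ i, 0 < u i) (hv : 0 < v) (hx : x ∈ Sd d) : 0 ≤ dirK d u v x := by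
  rw [dirK_eq_dirichletConst_mul]
  exact mul_nonneg (dirichletConst_pos hu hv).le (one_sub_sum_rpow_mul_prod_rpow_nonneg hx _ _)

theorem log_dirichletConst (hu : ∀ i, 0 < u i) (hv : 0 < v) :
    log (dirichletConst u v) =
      log (Gamma (∑ i, u i + v)) - (log (Gamma v) + ∑ i, log (Gamma (u i))) := by
  have hsum : 0 ≤ ∑ i, u i := Finset.sum_nonneg fun i _ ↦ (hu i).le
  have hΓ {a : ℝ} (ha : 0 < a) : Gamma a ≠ 0 := (Gamma_pos_of_pos ha).ne'
  have hΓprod : ∏ i, Gamma (u i) ≠ 0 := Finset.prod_ne_zero_iff.2 fun i _ ↦ hΓ (hu i)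
  rw [dirichletConst, log_div (hΓ (by positivity)) (mul_ne_zero (hΓ hv) hΓprod),
    log_mul (hΓ hv) hΓprod, log_prod fun i _ ↦ hΓ (hu i)]

@[fun_prop]
theorem measurable_dirK (u : Fin d → ℝ) (v : ℝ) : Measurable (dirK d u v) := by
  unfold dirK
  fun_prop

theorem gammaPDF_mul_prod_gammaPDF_of_mem_sd (hu : ∀ i, 0 < u i) (hv : 0 < v) (hx : x ∈ Sd d) :
    gammaPDF v 1 (1 - ∑ i, x i) * ∏ i, gammaPDF (u i) 1 (x i) =
      gammaPDF (∑ i, u i + v) 1 1 * ENNReal.ofReal (dirK d u v x) := by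
  obtain ⟨hx₀, hx₁⟩ := mem_sd_iff.1 hx
  have hx₁' : 0 ≤ 1 - ∑ i, x i := sub_nonneg.2 hx₁
  have hsum : 0 ≤ ∑ i, u i := Finset.sum_nonneg fun i _ ↦ (hu i).le
  have hΓ (i : Fin d) : 0 < Gamma (u i) := Gamma_pos_of_pos (hu i)
  have hΓprod : 0 < ∏ i, Gamma (u i) := Finset.prod_pos fun i _ ↦ hΓ i
  have hexp : exp (-(1 - ∑ i, x i)) * ∏ i, exp (-x i) = exp (-1) := by
    rw [← exp_sum, ← exp_add, Finset.sum_neg_distrib]; ring_nf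
  simp only [gammaPDF_of_nonneg hx₁', gammaPDF_of_nonneg (hx₀ _), gammaPDF_of_nonneg zero_le_one,
    one_rpow, one_mul, mul_one]
  rw [← ENNReal.ofReal_prod_of_nonneg fun i _ ↦ mul_nonneg (mul_nonneg
      (one_div_nonneg.2 (hΓ i).le) (rpow_nonneg (hx₀ i) _)) (exp_nonneg _),
    ← ENNReal.ofReal_mul (by positivity), ← ENNReal.ofReal_mul (by positivity), ← hexp, dirK]
  simp only [Finset.prod_mul_distrib, Finset.prod_div_distrib, Finset.prod_const_one]
  congr 1
  field_simp

theorem gammaPDF_mul_prod_gammaPDF_of_notMem_sd (hx : x ∉ Sd d) :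
    gammaPDF v 1 (1 - ∑ i, x i) * ∏ i, gammaPDF (u i) 1 (x i) = 0 := by
  by_cases hx₀ : ∀ i, 0 ≤ x i
  · have hx₁ : 1 - ∑ i, x i < 0 := by
      by_contra! hle
      exact hx (mem_sd_iff.2 ⟨hx₀, sub_nonneg.1 hle⟩)
    rw [gammaPDF_of_neg hx₁, zero_mul]
  · obtain ⟨i, hi⟩ := not_forall.1 hx₀
    rw [Finset.prod_eq_zero (Finset.mem_univ i) (gammaPDF_of_neg (not_le.1 hi)), mul_zero]

theorem setLIntegral_dirK_eq_one (hu : ∀ i, 0 < u i) (hv : 0 < v) :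
    ∫⁻ x in Sd d, ENNReal.ofReal (dirK d u v x) = 1 := by
  have hind (x : Fin d → ℝ) : gammaPDF v 1 (1 - ∑ i, x i) * ∏ i, gammaPDF (u i) 1 (x i) =
      (Sd d).indicator
        (fun x ↦ gammaPDF (∑ i, u i + v) 1 1 * ENNReal.ofReal (dirK d u v x)) x := by
    by_cases hx : x ∈ Sd d
    · rw [Set.indicator_of_mem hx, gammaPDF_mul_prod_gammaPDF_of_mem_sd hu hv hx]
    · rw [Set.indicator_of_notMem hx, gammaPDF_mul_prod_gammaPDF_of_notMem_sd hx]
  have hsum : 0 ≤ ∑ i, u i := Finset.sum_nonneg fun i _ ↦ (hu i).le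
  have hpos : gammaPDF (∑ i, u i + v) 1 1 ≠ 0 :=
    (ENNReal.ofReal_pos.2 (gammaPDFReal_pos (by positivity) one_pos one_pos)).ne'
  have htotal := lintegral_gammaPDF_sub_sum_mul_prod_gammaPDF hu hv one_pos one_ne_zero
  rw [lintegral_congr hind, lintegral_indicator (measurableSet_sd d),
    lintegral_const_mul _ (by fun_prop)] at htotal
  exact (ENNReal.mul_eq_left hpos ENNReal.ofReal_ne_top).1 htotal

theorem setIntegral_dirK_eq_one (hu : ∀ i, 0 < u i) (hv : 0 < v) :
    ∫ x in Sd d, dirK d u v x = 1 := by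
  rw [integral_eq_lintegral_of_nonneg_ae _ (measurable_dirK u v).aestronglyMeasurable,
    setLIntegral_dirK_eq_one hu hv, ENNReal.toReal_one]
  filter_upwards [ae_restrict_mem (measurableSet_sd d)] with x hx
  exact dirK_nonneg hu hv hx

end DirichletDensity

section DirichletKernel

variable {d : ℕ} {s : Fin d → ℝ} {b q : ℝ}

/-- The normalising constant of the Dirichlet kernel `κ_{s,b}`. -/
noncomputable def kernelConst (s : Fin d → ℝ) (b : ℝ) : ℝ :=
  dirichletConst (fun i ↦ s i / b + 1) ((1 - ∑ i, s i) / b + 1)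

/-- The leading term `ψ(s) (b / 2)^{-d/2} e^{H(s) / b}` of `kernelConst s b` as `b → 0`, where
`H(s)` is the Shannon entropy of the probability vector `(1 - ‖s‖₁, s₁, …, s_d)`. -/
noncomputable def kernelConstLead (s : Fin d → ℝ) (b : ℝ) : ℝ :=
  psiFun d s * (b / 2) ^ (-(d : ℝ) / 2) *
    exp ((negMulLog (1 - ∑ i, s i) + ∑ i, negMulLog (s i)) / b)

theorem kernelConst_pos (hs : s ∈ SdInt d) (hb : 0 < b) : 0 < kernelConst s b :=
  dirichletConst_pos (fun i ↦ add_pos (div_pos (pos_of_mem_sdInt hs i) hb) one_pos)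
    (add_pos (div_pos (one_sub_sum_pos_of_mem_sdInt hs) hb) one_pos)

theorem psiFun_pos (hs : s ∈ SdInt d) : 0 < psiFun d s := by
  have hs₀ := one_sub_sum_pos_of_mem_sdInt hs
  have hprod : 0 < ∏ i, s i ^ ((1 : ℝ) / 2) :=
    Finset.prod_pos fun i _ ↦ rpow_pos_of_pos (pos_of_mem_sdInt hs i) _
  unfold psiFun
  positivity

theorem kernelConstLead_pos (hs : s ∈ SdInt d) (hb : 0 < b) : 0 < kernelConstLead s b := by
  have hψ := psiFun_pos hs
  unfold kernelConstLead
  positivity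

theorem kappa_eq_kernelConst_mul (s : Fin d → ℝ) (b : ℝ) (x : Fin d → ℝ) :
    kappa d s b x =
      kernelConst s b * ((1 - ∑ i, x i) ^ ((1 - ∑ i, s i) / b) * ∏ i, x i ^ (s i / b)) := by
  rw [kappa, dirK_eq_dirichletConst_mul]
  simp only [add_sub_cancel_right, kernelConst]

theorem kappa_rpow_eq {x : Fin d → ℝ} (hs : s ∈ SdInt d) (hb : 0 < b) (hq : 0 < q)
    (hx : x ∈ Sd d) :
    kappa d s b x ^ q =
      kernelConst s b ^ q / kernelConst s (b / q) * kappa d s (b / q) x := by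
  obtain ⟨hx₀, hx₁⟩ := mem_sd_iff.1 hx
  have hx₁' : 0 ≤ 1 - ∑ i, x i := sub_nonneg.2 hx₁
  have hC := (kernelConst_pos hs (div_pos hb hq)).ne'
  have hexponent (a : ℝ) : a / (b / q) = a / b * q := by field_simp
  rw [kappa_eq_kernelConst_mul, kappa_eq_kernelConst_mul,
    ← mul_assoc (kernelConst s b ^ q / kernelConst s (b / q)), div_mul_cancel₀ _ hC,
    mul_rpow (kernelConst_pos hs hb).le (one_sub_sum_rpow_mul_prod_rpow_nonneg hx _ _),
    mul_rpow (rpow_nonneg hx₁' _) (Finset.prod_nonneg fun i _ ↦ rpow_nonneg (hx₀ i) _),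
    ← finsetProd_rpow _ _ fun i _ ↦ rpow_nonneg (hx₀ i) _]
  simp only [hexponent, rpow_mul hx₁', rpow_mul (hx₀ _)]

theorem setIntegral_kappa_rpow (hs : s ∈ SdInt d) (hb : 0 < b) (hq : 0 < q) :
    ∫ x in Sd d, kappa d s b x ^ q = kernelConst s b ^ q / kernelConst s (b / q) := by
  have hbq : 0 < b / q := div_pos hb hq
  have hone : ∫ x in Sd d, kappa d s (b / q) x = 1 :=
    setIntegral_dirK_eq_one (fun i ↦ add_pos (div_pos (pos_of_mem_sdInt hs i) hbq) one_pos)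
      (add_pos (div_pos (one_sub_sum_pos_of_mem_sdInt hs) hbq) one_pos)
  rw [setIntegral_congr_fun (measurableSet_sd d) fun x hx ↦ kappa_rpow_eq hs hb hq hx,
    integral_const_mul, hone, mul_one]

theorem log_psiFun (hs : s ∈ SdInt d) :
    log (psiFun d s) =
      -(d : ℝ) / 2 * log (4 * π) - (log (1 - ∑ i, s i) + ∑ i, log (s i)) / 2 := by
  have hs₀ := one_sub_sum_pos_of_mem_sdInt hs
  have hpow (i : Fin d) : 0 < s i ^ ((1 : ℝ) / 2) := rpow_pos_of_pos (pos_of_mem_sdInt hs i) _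
  have hprod : 0 < ∏ i, s i ^ ((1 : ℝ) / 2) := Finset.prod_pos fun i _ ↦ hpow i
  rw [psiFun, log_div (by positivity) (by positivity), log_rpow (by positivity),
    log_mul (by positivity) hprod.ne', log_rpow hs₀, log_prod fun i _ ↦ (hpow i).ne']
  simp only [log_rpow (pos_of_mem_sdInt hs _), ← Finset.mul_sum]
  ring

theorem log_kernelConstLead (hs : s ∈ SdInt d) (hb : 0 < b) :
    log (kernelConstLead s b) = log (psiFun d s) - (d : ℝ) / 2 * log (b / 2) +
      (negMulLog (1 - ∑ i, s i) + ∑ i, negMulLog (s i)) / b := by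
  have hψ := psiFun_pos hs
  rw [kernelConstLead, log_mul (by positivity) (exp_ne_zero _), log_exp,
    log_mul hψ.ne' (by positivity), log_rpow (by positivity)]
  ring

theorem log_Gamma_div_add_one {c : ℝ} (hc : 0 < c) (hb : 0 < b) :
    log (Gamma (c / b + 1)) = log c / 2 - (negMulLog c + c * log b + c) / b +
      (log (2 * π) - log b) / 2 - log (Rfun (c / b)) := by
  rw [log_Gamma_add_one (div_pos hc hb), log_div hc.ne' hb.ne', negMulLog]
  field_simp
  ring

theorem log_Gamma_inv_add_one_add_natCast (hb : 0 < b) (n : ℕ) :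
    log (Gamma (1 / b + 1 + n)) = log (Gamma (1 / b + 1)) +
      ∑ j ∈ Finset.range n, log (1 + (j + 1 : ℝ) * b) - n * log b := by
  have hfactor (j : ℕ) : log (1 / b + 1 + j) = log (1 + (j + 1 : ℝ) * b) - log b := by
    rw [← log_div (by positivity) hb.ne']; congr 1; field_simp; ring
  rw [log_Gamma_add_natCast (by positivity)]
  simp only [hfactor, Finset.sum_sub_distrib, Finset.sum_const, Finset.card_range, nsmul_eq_mul]
  ring

theorem log_kernelConst (hs : s ∈ SdInt d) (hb : 0 < b) :
    log (kernelConst s b) = log (kernelConstLead s b) +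
      (∑ j ∈ Finset.range d, log (1 + (j + 1 : ℝ) * b) - log (Rfun (1 / b)) +
        log (Rfun ((1 - ∑ i, s i) / b)) + ∑ i, log (Rfun (s i / b))) := by
  have hs₀ := one_sub_sum_pos_of_mem_sdInt hs
  have hsi := pos_of_mem_sdInt hs
  have htotal : ∑ i, (s i / b + 1) + ((1 - ∑ i, s i) / b + 1) = 1 / b + 1 + d := by
    simp only [Finset.sum_add_distrib, ← Finset.sum_div, Finset.sum_const, Finset.card_univ,
      Fintype.card_fin, nsmul_eq_mul]
    ring
  have hlog₂ : log (2 * π) = log 2 + log π := log_mul two_ne_zero pi_ne_zero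
  have hlog₄ : log (4 * π) = 2 * log 2 + log π := by
    rw [log_mul four_ne_zero pi_ne_zero, show (4 : ℝ) = 2 ^ 2 by norm_num, log_pow]; norm_num
  rw [kernelConst, log_dirichletConst (fun i ↦ add_pos (div_pos (hsi i) hb) one_pos)
      (add_pos (div_pos hs₀ hb) one_pos), htotal, log_Gamma_inv_add_one_add_natCast hb,
    log_Gamma_div_add_one one_pos hb, log_Gamma_div_add_one hs₀ hb, log_kernelConstLead hs hb,
    log_psiFun hs, log_div hb.ne' two_ne_zero, hlog₄]
  simp only [log_Gamma_div_add_one (hsi _) hb, Finset.sum_add_distrib, Finset.sum_sub_distrib,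
    ← Finset.sum_div, ← Finset.sum_mul, Finset.sum_const, Finset.card_univ, Fintype.card_fin,
    nsmul_eq_mul, log_one, negMulLog_one, hlog₂]
  field_simp
  ring

theorem isBigO_log_kernelConst_sub_log_kernelConstLead (hs : s ∈ SdInt d) :
    (fun b ↦ log (kernelConst s b) - log (kernelConstLead s b)) =O[𝓝[>] 0] fun b ↦ b := by
  have hlog : (fun b : ℝ ↦ ∑ j ∈ Finset.range d, log (1 + (j + 1 : ℝ) * b)) =O[𝓝[>] 0]
      fun b ↦ b :=
    .fun_sum fun j _ ↦ (isBigO_log_one_add_const_mul (j + 1)).mono nhdsWithin_le_nhds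
  have hstirling : (fun b : ℝ ↦ ∑ i, log (Rfun (s i / b))) =O[𝓝[>] 0] fun b ↦ b :=
    .fun_sum fun i _ ↦ isBigO_log_rfun_div (pos_of_mem_sdInt hs i)
  have hall := ((hlog.sub (isBigO_log_rfun_div one_pos)).add
    (isBigO_log_rfun_div (one_sub_sum_pos_of_mem_sdInt hs))).add hstirling
  refine hall.congr' ?_ .rfl
  filter_upwards [self_mem_nhdsWithin] with b (hb : 0 < b)
  rw [log_kernelConst hs hb, add_sub_cancel_left]

theorem kernelConstLead_rpow_div_rpow (hs : s ∈ SdInt d) (hb : 0 < b) (hq : 0 < q) :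
    (kernelConstLead s b ^ q / kernelConstLead s (b / q)) ^ (2 / q) =
      b ^ (-(d : ℝ) * (1 - q⁻¹)) * psiFun d s ^ (2 * (1 - q⁻¹)) /
        (2 ^ (-(d : ℝ) * (1 - q⁻¹)) * q ^ (d * q⁻¹)) := by
  have hbq : 0 < b / q := div_pos hb hq
  have hψ := psiFun_pos hs
  have hL := kernelConstLead_pos hs hb
  have hLq := kernelConstLead_pos hs hbq
  refine log_injOn_pos (Set.mem_Ioi.2 (by positivity)) (Set.mem_Ioi.2 (by positivity)) ?_
  rw [log_rpow (by positivity), log_div (by positivity) hLq.ne', log_rpow hL,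
    log_div (by positivity) (by positivity), log_mul (by positivity) (by positivity),
    log_mul (by positivity) (by positivity), log_rpow hb, log_rpow hψ, log_rpow two_pos,
    log_rpow hq, log_kernelConstLead hs hb, log_kernelConstLead hs hbq,
    log_div hb.ne' two_ne_zero, log_div hbq.ne' two_ne_zero, log_div hb.ne' hq.ne']
  field_simp
  ring

end DirichletKernel

theorem dirichlet_kernel_Lq_norm_general {d : ℕ} {q : ℝ} (hq : 0 < q) {s : Fin d → ℝ}
    (hs : s ∈ SdInt d) :
    (fun b : ℝ ↦
        (∫ x in Sd d, kappa d s b x ^ q) ^ (2 / q) /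
          (b ^ (-(d : ℝ) * (1 - q⁻¹)) * psiFun d s ^ (2 * (1 - q⁻¹)) /
            (2 ^ (-(d : ℝ) * (1 - q⁻¹)) * q ^ (d * q⁻¹))) - 1)
      =O[𝓝[>] 0] fun b ↦ b := by
  have herr := isBigO_log_kernelConst_sub_log_kernelConstLead hs
  have hE := ((herr.const_mul_left q).sub (isBigO_comp_div_const herr hq)).const_mul_left (2 / q)
  have hE₀ := hE.trans_tendsto (tendsto_id.mono_left nhdsWithin_le_nhds)
  refine ((isBigO_exp_sub_one hE₀).trans hE).congr' ?_ .rfl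
  filter_upwards [self_mem_nhdsWithin] with b (hb : 0 < b)
  have hbq : 0 < b / q := div_pos hb hq
  rw [setIntegral_kappa_rpow hs hb hq, ← kernelConstLead_rpow_div_rpow hs hb hq,
    rpow_div_rpow_div_eq_exp (kernelConst_pos hs hb) (kernelConst_pos hs hbq)
      (kernelConstLead_pos hs hb) (kernelConstLead_pos hs hbq)]

/-- Lemma: asymptotics of the squared L^q norm of the Dirichlet kernel. -/
theorem dirichlet_kernel_Lq_norm (d : ℕ) (hd : 1 ≤ d) (q p : ℝ) (hq : 1 < q)
    (hpq : 1 / p + 1 / q = 1) (s : Fin d → ℝ) (hs : s ∈ SdInt d) :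
    (fun b : ℝ =>
        (∫ x in Sd d, (kappa d s b x) ^ q) ^ (2 / q) /
          ((b ^ (-(d : ℝ) / p) * (psiFun d s) ^ (2 / p)) /
            (2 ^ (-(d : ℝ) / p) * q ^ ((d : ℝ) / q))) - 1)
      =O[𝓝[>] (0 : ℝ)] (fun b => b) := by
  have hpq' : p⁻¹ = 1 - q⁻¹ := by linarith [one_div p, one_div q]
  simpa only [div_eq_mul_inv _ p, div_eq_mul_inv (d : ℝ) q, hpq'] using
    dirichlet_kernel_Lq_norm_general (one_pos.trans hq) hs
end

section
/- Let d ∈ ℕ and s ∈ Int(S_d). Then, as b → 0, max_{x ∈ S_d} κ_{s,b}(x) ≪ b^{−d/2} ψ(s), i.e., there is a constant C (depending only on d) such that sup_{x ∈ S_d} κ_{s,b}(x) ≤ C b^{−d/2} ψ(s) for all sufficiently small b > 0. -/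
open MeasureTheory Filter Asymptotics Real Topology

/-!
In barycentric coordinates the kernel is `κ_{s,b}(x) = Γ(N + d + 1) ∏ x_i ^ (N s_i) / Γ(N s_i + 1)`
with `N = b⁻¹`, and by weighted AM-GM its maximum over the simplex is attained at `x = s`. There
Stirling's formula makes the exponential factors cancel, leaving `N ^ (d / 2) ∏ s_i ^ (-1 / 2)` up
to a constant. Only two Stirling bounds enter: `R ≤ 1` on `(0, ∞)` for the factors `Γ(N s_i + 1)`,
and a positive lower bound for `R` on `[1, ∞)` for `Γ(N + 1)`. Both come from the fact that
`R(z) ≤ R(z + 1)`: the sequence `R(z + n)` increases to `1`, and on `[1, ∞)` the values of `R`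
dominate those on `[1, 2]`. Since `R(N s_i) ≤ 1` even when `N s_i` is small, the estimate is uniform
over `s` and `b ≤ 1`.
-/

theorem Rfun_add_one {z : ℝ} (hz : 0 < z) :
    Rfun (z + 1) = Rfun z * ((1 + z⁻¹) ^ (z + 1 / 2) / exp 1) := by
  have hpow : (z + 1) ^ (z + 1 + 1 / 2) = z ^ (z + 1 / 2) * (1 + z⁻¹) ^ (z + 1 / 2) * (z + 1) := by
    rw [← mul_rpow hz.le (by positivity), mul_one_add, mul_inv_cancel₀ hz.ne',
      ← rpow_add_one (by positivity), add_right_comm]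
  have hΓ : Real.Gamma (z + 1) ≠ 0 := (Gamma_pos_of_pos (by positivity)).ne'
  rw [Rfun, Rfun, hpow, Gamma_add_one (by positivity), neg_add, exp_add, exp_neg 1]
  field_simp

theorem exp_one_le_one_add_inv_rpow {z : ℝ} (hz : 0 < z) :
    exp 1 ≤ (1 + z⁻¹) ^ (z + 1 / 2) := by
  have hlog : (z + 1 / 2)⁻¹ ≤ log (1 + z⁻¹) := by
    refine le_of_eq_of_le ?_ (le_log_one_add_of_nonneg (inv_nonneg.2 hz.le))
    field_simp
    ring
  rw [rpow_def_of_pos (by positivity), exp_le_exp]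
  exact (inv_le_iff_one_le_mul₀ (by positivity)).1 hlog

theorem Rfun_pos {z : ℝ} (hz : 0 < z) : 0 < Rfun z := by
  have : 0 < Real.Gamma (z + 1) := Gamma_pos_of_pos (by positivity)
  unfold Rfun
  positivity

theorem Rfun_le_Rfun_add_one {z : ℝ} (hz : 0 < z) : Rfun z ≤ Rfun (z + 1) := by
  rw [Rfun_add_one hz]
  exact le_mul_of_one_le_right (Rfun_pos hz).le
    ((one_le_div (exp_pos 1)).2 (exp_one_le_one_add_inv_rpow hz))

theorem monotone_Rfun_add_natCast {z : ℝ} (hz : 0 < z) :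
    Monotone fun n : ℕ ↦ Rfun (z + n) :=
  monotone_nat_of_le_succ fun n ↦ by
    simpa only [Nat.cast_succ, add_assoc] using Rfun_le_Rfun_add_one (z := z + n) (by positivity)

theorem Rfun_natCast {n : ℕ} (hn : n ≠ 0) : Rfun n = √π / Stirling.stirlingSeq n := by
  have hn' : (0 : ℝ) < n := by positivity
  rw [Rfun, Stirling.stirlingSeq, Gamma_nat_eq_factorial, rpow_add hn', rpow_natCast,
    ← sqrt_eq_rpow, div_pow, ← exp_nat_mul, exp_neg, mul_one, sqrt_mul zero_le_two,
    sqrt_mul zero_le_two]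
  field_simp

theorem Gamma_add_natCast_eq_mul_prod {z : ℝ} (hz : 0 < z) (n : ℕ) :
    Real.Gamma (z + n) = Real.Gamma z * ∏ j ∈ Finset.range n, (z + j) := by
  induction n with
  | zero => simp
  | succ n ih =>
    rw [Nat.cast_succ, ← add_assoc, Gamma_add_one (by positivity), ih, Finset.prod_range_succ]
    ring

theorem Rfun_add_natCast {z : ℝ} (hz : 0 < z) {n : ℕ} (hn : n ≠ 0) :
    Rfun (z + n) = Rfun n * (GammaSeq z n / Real.Gamma z) *
      (exp (-z) * ((1 + z / n) ^ n * (1 + z / n) ^ (z + 1 / 2))) := by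
  have hn' : (0 : ℝ) < n := by positivity
  have hpow : (z + n) ^ (z + n + 1 / 2) =
      (n : ℝ) ^ z * (n : ℝ) ^ (n + 1 / 2 : ℝ) * ((1 + z / n) ^ n * (1 + z / n) ^ (z + 1 / 2)) := by
    rw [← rpow_add hn', ← rpow_natCast (1 + z / n), ← rpow_add (by positivity), ← add_assoc,
      ← add_assoc, ← add_comm z, ← mul_rpow hn'.le (by positivity), mul_one_add,
      mul_div_cancel₀ z hn'.ne', add_comm (n : ℝ)]
  have hΓ : Real.Gamma (z + n + 1) = Real.Gamma z * ∏ j ∈ Finset.range (n + 1), (z + j) := by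
    rw [← Gamma_add_natCast_eq_mul_prod hz, Nat.cast_succ, add_assoc]
  have hΓz : Real.Gamma z ≠ 0 := (Gamma_pos_of_pos hz).ne'
  have hprod : ∏ j ∈ Finset.range (n + 1), (z + j) ≠ 0 :=
    Finset.prod_ne_zero_iff.2 fun j _ ↦ by positivity
  rw [Rfun, Rfun, GammaSeq, Gamma_nat_eq_factorial, hpow, hΓ, neg_add, exp_add]
  field_simp

theorem tendsto_Rfun_natCast : Tendsto (fun n : ℕ ↦ Rfun n) atTop (𝓝 1) := by
  have hπ : √π ≠ 0 := by positivity
  have h := (tendsto_const_nhds (x := √π)).div Stirling.tendsto_stirlingSeq_sqrt_pi hπ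
  rw [div_self hπ] at h
  refine h.congr' ?_
  filter_upwards [eventually_ne_atTop 0] with n hn using (Rfun_natCast hn).symm

theorem tendsto_Rfun_add_natCast {z : ℝ} (hz : 0 < z) :
    Tendsto (fun n : ℕ ↦ Rfun (z + n)) atTop (𝓝 1) := by
  have hΓ : Tendsto (fun n ↦ GammaSeq z n / Real.Gamma z) atTop (𝓝 1) := by
    simpa only [div_self (Gamma_pos_of_pos hz).ne'] using
      (GammaSeq_tendsto_Gamma z).div_const (Real.Gamma z)
  have hbase : Tendsto (fun n : ℕ ↦ (1 + z / n) ^ (z + 1 / 2)) atTop (𝓝 1) := by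
    simpa using ((tendsto_const_div_atTop_nhds_zero_nat z).const_add 1).rpow_const
      (p := z + 1 / 2) (Or.inl (by norm_num))
  have h := (tendsto_Rfun_natCast.mul hΓ).mul
    (((tendsto_one_add_div_pow_exp z).mul hbase).const_mul (exp (-z)))
  rw [mul_one, mul_one, one_mul, ← exp_add, neg_add_cancel, exp_zero] at h
  refine h.congr' ?_
  filter_upwards [eventually_ne_atTop 0] with n hn using (Rfun_add_natCast hz hn).symm

theorem Rfun_le_one {z : ℝ} (hz : 0 < z) : Rfun z ≤ 1 := by
  simpa using (monotone_Rfun_add_natCast hz).ge_of_tendsto (tendsto_Rfun_add_natCast hz) 0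

theorem exp_neg_one_le_exp_neg_mul_rpow {z : ℝ} (hz : 1 ≤ z) :
    exp (-1) ≤ exp (-z) * z ^ (z + 1 / 2) := by
  have hz0 : 0 < z := by linarith
  have hlog : 1 - z⁻¹ ≤ log z := one_sub_inv_le_log_of_pos hz0
  have hmul : z - 1 ≤ z * log z := by
    simpa [mul_sub, hz0.ne'] using mul_le_mul_of_nonneg_left hlog hz0.le
  rw [rpow_def_of_pos hz0, ← exp_add, exp_le_exp]
  linarith [log_nonneg hz]

theorem le_Rfun_of_mem_Icc {z : ℝ} (hz : z ∈ Set.Icc 1 2) : √(2 * π) / (2 * exp 1) ≤ Rfun z := by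
  obtain ⟨hz1, hz2⟩ := hz
  have : 0 < z := by linarith
  have : 0 < Real.Gamma (z + 1) := Gamma_pos_of_pos (by positivity)
  have hΓ_le : Real.Gamma (z + 1) ≤ 2 :=
    calc Real.Gamma (z + 1) ≤ Real.Gamma ((2 : ℕ) + 1) := by
          refine Gamma_strictMonoOn_Ici.monotoneOn ?_ ?_ ?_ <;> push_cast [Set.mem_Ici] <;> linarith
      _ = 2 := by rw [Gamma_nat_eq_factorial, Nat.factorial_two, Nat.cast_ofNat]
  calc √(2 * π) / (2 * exp 1) = √(2 * π) * exp (-1) / 2 := by rw [exp_neg]; field_simp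
    _ ≤ √(2 * π) * (exp (-z) * z ^ (z + 1 / 2)) / Real.Gamma (z + 1) := by
      gcongr
      exact exp_neg_one_le_exp_neg_mul_rpow hz1
    _ = Rfun z := by rw [Rfun, mul_assoc]

theorem le_Rfun_of_one_le {z : ℝ} (hz : 1 ≤ z) : √(2 * π) / (2 * exp 1) ≤ Rfun z := by
  set w := z - ⌊z - 1⌋₊ with hw
  have hw_mem : w ∈ Set.Icc 1 2 :=
    ⟨by linarith [Nat.floor_le (sub_nonneg.2 hz)], by linarith [Nat.lt_floor_add_one (z - 1)]⟩
  calc √(2 * π) / (2 * exp 1) ≤ Rfun w := le_Rfun_of_mem_Icc hw_mem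
    _ ≤ Rfun (w + ⌊z - 1⌋₊) := by
      simpa using monotone_Rfun_add_natCast (by linarith [hw_mem.1]) (Nat.zero_le ⌊z - 1⌋₊)
    _ = Rfun z := by rw [hw, sub_add_cancel]

theorem Rfun_mul_Gamma_add_one {z : ℝ} (hz : 0 < z) :
    Rfun z * Real.Gamma (z + 1) = √(2 * π * z) * (z / exp 1) ^ z := by
  rw [Rfun, div_mul_cancel₀ _ (Gamma_pos_of_pos (by positivity)).ne', rpow_add hz,
    ← sqrt_eq_rpow, div_rpow hz.le (exp_pos 1).le, exp_one_rpow, exp_neg,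
    sqrt_mul (by positivity) z]
  field_simp

theorem sqrt_mul_rpow_le_Gamma_add_one {z : ℝ} (hz : 0 < z) :
    √(2 * π * z) * (z / exp 1) ^ z ≤ Real.Gamma (z + 1) := by
  rw [← Rfun_mul_Gamma_add_one hz]
  exact mul_le_of_le_one_left (Gamma_pos_of_pos (by positivity)).le (Rfun_le_one hz)

theorem Gamma_add_one_le_sqrt_mul_rpow {z : ℝ} (hz : 1 ≤ z) :
    Real.Gamma (z + 1) ≤ 2 * exp 1 * √z * (z / exp 1) ^ z := by
  have hz0 : 0 < z := by linarith
  have h := mul_le_mul_of_nonneg_right (le_Rfun_of_one_le hz)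
    (Gamma_pos_of_pos (by positivity : 0 < z + 1)).le
  rw [Rfun_mul_Gamma_add_one hz0, sqrt_mul (by positivity) z, div_mul_eq_mul_div,
    div_le_iff₀ (by positivity)] at h
  refine le_of_mul_le_mul_left (h.trans_eq ?_) (by positivity : 0 < √(2 * π))
  ring

theorem Gamma_add_natCast_le {x : ℝ} (hx : 0 < x) (k : ℕ) :
    Real.Gamma (x + k) ≤ (x + k) ^ k * Real.Gamma x := by
  have hprod : ∏ j ∈ Finset.range k, (x + j) ≤ ∏ _j ∈ Finset.range k, (x + k) :=
    Finset.prod_le_prod (fun j _ ↦ by positivity) fun j hj ↦ by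
      gcongr
      exact (Finset.mem_range.1 hj).le
  rw [Finset.prod_const, Finset.card_range] at hprod
  rw [Gamma_add_natCast_eq_mul_prod hx, mul_comm]
  exact mul_le_mul_of_nonneg_right hprod (Gamma_pos_of_pos hx).le

theorem rpow_neg_natCast_div_two {y : ℝ} (hy : 0 ≤ y) (n : ℕ) :
    y ^ (-(n : ℝ) / 2) = (√y ^ n)⁻¹ := by
  rw [neg_div, rpow_neg hy, rpow_div_two_eq_sqrt _ hy, rpow_natCast]

section Weights

variable {ι : Type*} [Fintype ι] {w x : ι → ℝ} {N : ℝ}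

theorem prod_rpow_le_prod_rpow_self (hw : ∀ i, 0 < w i) (hw_sum : ∑ i, w i = 1)
    (hx : ∀ i, 0 ≤ x i) (hx_sum : ∑ i, x i ≤ 1) :
    ∏ i, x i ^ w i ≤ ∏ i, w i ^ w i := by
  have hpos : 0 < ∏ i, w i ^ w i := Finset.prod_pos fun i _ ↦ rpow_pos_of_pos (hw i) _
  rw [← div_le_one hpos]
  calc (∏ i, x i ^ w i) / ∏ i, w i ^ w i
      = ∏ i, (x i / w i) ^ w i := by
        rw [← Finset.prod_div_distrib]
        exact Finset.prod_congr rfl fun i _ ↦ (div_rpow (hx i) (hw i).le _).symm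
    _ ≤ ∑ i, w i * (x i / w i) :=
        geom_mean_le_arith_mean_weighted _ w _ (fun i _ ↦ (hw i).le) hw_sum
          fun i _ ↦ div_nonneg (hx i) (hw i).le
    _ = ∑ i, x i := Finset.sum_congr rfl fun i _ ↦ mul_div_cancel₀ _ (hw i).ne'
    _ ≤ 1 := hx_sum

theorem prod_rpow_mul_le_prod_rpow_mul_self (hw : ∀ i, 0 < w i) (hw_sum : ∑ i, w i = 1)
    (hx : ∀ i, 0 ≤ x i) (hx_sum : ∑ i, x i ≤ 1) (hN : 0 ≤ N) :
    ∏ i, x i ^ (w i * N) ≤ ∏ i, w i ^ (w i * N) := by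
  have hpow {y : ι → ℝ} (hy : ∀ i, 0 ≤ y i) :
      ∏ i, y i ^ (w i * N) = (∏ i, y i ^ w i) ^ N := by
    rw [← finsetProd_rpow _ _ fun i _ ↦ rpow_nonneg (hy i) _]
    exact Finset.prod_congr rfl fun i _ ↦ rpow_mul (hy i) _ _
  rw [hpow hx, hpow fun i ↦ (hw i).le]
  exact rpow_le_rpow (Finset.prod_nonneg fun i _ ↦ rpow_nonneg (hx i) _)
    (prod_rpow_le_prod_rpow_self hw hw_sum hx hx_sum) hN

theorem rpow_div_Gamma_le {v : ℝ} (hv : 0 < v) (hN : 0 < N) :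
    v ^ (v * N) / Real.Gamma (v * N + 1) ≤ (exp 1 / N) ^ (v * N) / √(2 * π * N * v) := by
  have hvN : 0 < v * N := mul_pos hv hN
  have hpow : v ^ (v * N) = (exp 1 / N) ^ (v * N) * (v * N / exp 1) ^ (v * N) := by
    rw [← mul_rpow (by positivity) (by positivity)]
    congr 1
    field_simp
  rw [div_le_div_iff₀ (Gamma_pos_of_pos (by positivity)) (by positivity), hpow, mul_assoc]
  gcongr
  rw [mul_comm, mul_assoc _ N, mul_comm N]
  exact sqrt_mul_rpow_le_Gamma_add_one hvN

theorem Gamma_mul_prod_rpow_div_Gamma_le (hw : ∀ i, 0 < w i) (hw_sum : ∑ i, w i = 1)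
    (hN : 1 ≤ N) :
    Real.Gamma (N + 1) * ∏ i, w i ^ (w i * N) / Real.Gamma (w i * N + 1) ≤
      2 * exp 1 * √N / ∏ i, √(2 * π * N * w i) := by
  have hN0 : 0 < N := by linarith
  have hΓ (i) : 0 < Real.Gamma (w i * N + 1) :=
    Gamma_pos_of_pos (add_pos (mul_pos (hw i) hN0) one_pos)
  calc Real.Gamma (N + 1) * ∏ i, w i ^ (w i * N) / Real.Gamma (w i * N + 1)
      ≤ (2 * exp 1 * √N * (N / exp 1) ^ N) *
          ∏ i, (exp 1 / N) ^ (w i * N) / √(2 * π * N * w i) :=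
        mul_le_mul_of_nonneg (Gamma_add_one_le_sqrt_mul_rpow hN)
          (Finset.prod_le_prod (fun i _ ↦ div_nonneg (rpow_nonneg (hw i).le _) (hΓ i).le)
            fun i _ ↦ rpow_div_Gamma_le (hw i) hN0)
          (Gamma_pos_of_pos (by positivity)).le (by positivity)
    _ = 2 * exp 1 * √N * ((N / exp 1) ^ N * (exp 1 / N) ^ N) / ∏ i, √(2 * π * N * w i) := by
        rw [Finset.prod_div_distrib, ← rpow_sum_of_pos (by positivity), ← Finset.sum_mul, hw_sum,
          one_mul]
        ring
    _ = 2 * exp 1 * √N / ∏ i, √(2 * π * N * w i) := by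
        rw [← mul_rpow (by positivity) (by positivity), div_mul_div_cancel₀ (exp_pos 1).ne',
          div_self hN0.ne', one_rpow, mul_one]

end Weights

/-- The barycentric coordinates `(1 - ∑ i, s i, s 0, …, s (d - 1))` of a point of the simplex;
in them the exponents of `kappa` and the factors of `psiFun` become products over `Fin (d + 1)`. -/
def baryCoord {d : ℕ} (s : Fin d → ℝ) : Fin (d + 1) → ℝ :=
  Fin.cons (1 - ∑ i, s i) s

section Simplex

variable {d : ℕ} {s x : Fin d → ℝ} {b : ℝ}

theorem sum_baryCoord (s : Fin d → ℝ) : ∑ i, baryCoord s i = 1 := by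
  simp [baryCoord, Fin.sum_univ_succ]

theorem baryCoord_nonneg (hx : x ∈ Sd d) (i : Fin (d + 1)) : 0 ≤ baryCoord x i := by
  have hsum : ∑ i, x i ≤ 1 := (Finset.sum_le_sum fun i _ ↦ le_abs_self (x i)).trans hx.2
  cases i using Fin.cases with
  | zero => exact sub_nonneg.2 hsum
  | succ j => exact (hx.1 j).1

theorem baryCoord_pos (hs : s ∈ SdInt d) (i : Fin (d + 1)) : 0 < baryCoord s i := by
  have hsum : ∑ i, s i < 1 := (Finset.sum_le_sum fun i _ ↦ le_abs_self (s i)).trans_lt hs.2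
  cases i using Fin.cases with
  | zero => exact sub_pos.2 hsum
  | succ j => exact (hs.1 j).1

theorem kappa_eq_prod_baryCoord (s : Fin d → ℝ) (b : ℝ) (x : Fin d → ℝ) :
    kappa d s b x = Real.Gamma (b⁻¹ + 1 + d) / (∏ i, Real.Gamma (baryCoord s i * b⁻¹ + 1)) *
      ∏ i, baryCoord x i ^ (baryCoord s i * b⁻¹) := by
  have hparam : ∑ i, (s i / b + 1) + ((1 - ∑ i, s i) / b + 1) = b⁻¹ + 1 + d := by
    rw [Finset.sum_add_distrib, ← Finset.sum_div, Finset.sum_const, Finset.card_univ,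
      Fintype.card_fin, nsmul_one]
    ring
  rw [kappa, dirK, hparam]
  simp only [Fin.prod_univ_succ, baryCoord, Fin.cons_zero, Fin.cons_succ, add_sub_cancel_right,
    div_eq_mul_inv]
  ring

theorem psiFun_eq_prod_baryCoord (s : Fin d → ℝ) :
    psiFun d s = (√(4 * π) ^ d * ∏ i, √(baryCoord s i))⁻¹ := by
  rw [psiFun, rpow_neg_natCast_div_two (by positivity), mul_inv, ← div_eq_mul_inv]
  simp only [Fin.prod_univ_succ, baryCoord, Fin.cons_zero, Fin.cons_succ, sqrt_eq_rpow]

theorem kappa_le_mul_Gamma_mul_prod (hs : s ∈ SdInt d) (hb : 0 < b) (hx : x ∈ Sd d) :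
    kappa d s b x ≤ (b⁻¹ + 1 + d) ^ d * (Real.Gamma (b⁻¹ + 1) *
      ∏ i, baryCoord s i ^ (baryCoord s i * b⁻¹) / Real.Gamma (baryCoord s i * b⁻¹ + 1)) := by
  have hΓ (i) : 0 < Real.Gamma (baryCoord s i * b⁻¹ + 1) :=
    Gamma_pos_of_pos (add_pos (mul_pos (baryCoord_pos hs i) (inv_pos.2 hb)) one_pos)
  calc kappa d s b x
      ≤ (b⁻¹ + 1 + d) ^ d * Real.Gamma (b⁻¹ + 1) /
            (∏ i, Real.Gamma (baryCoord s i * b⁻¹ + 1)) *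
          ∏ i, baryCoord s i ^ (baryCoord s i * b⁻¹) := by
        rw [kappa_eq_prod_baryCoord]
        refine mul_le_mul_of_nonneg
          (div_le_div_of_nonneg_right (Gamma_add_natCast_le (by positivity) d) ?_)
          (prod_rpow_mul_le_prod_rpow_mul_self (baryCoord_pos hs) (sum_baryCoord s)
            (baryCoord_nonneg hx) (sum_baryCoord x).le (inv_nonneg.2 hb.le))
          (div_nonneg (Gamma_pos_of_pos (by positivity)).le ?_)
          (Finset.prod_nonneg fun i _ ↦ rpow_nonneg (baryCoord_pos hs i).le _) <;>
        exact Finset.prod_nonneg fun i _ ↦ (hΓ i).le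
    _ = _ := by
        rw [Finset.prod_div_distrib]
        ring

theorem dirichlet_kernel_sup_bound_general (hs : s ∈ SdInt d) (hb : 0 < b) (hb1 : b ≤ 1)
    (hx : x ∈ Sd d) :
    kappa d s b x ≤
      2 * exp 1 * (d + 2) ^ d * √2 ^ d / √(2 * π) * b ^ (-(d : ℝ) / 2) * psiFun d s := by
  have hN : 1 ≤ b⁻¹ := (one_le_inv₀ hb).2 hb1
  have hprod : 0 < ∏ i, √(baryCoord s i) :=
    Finset.prod_pos fun i _ ↦ sqrt_pos.2 (baryCoord_pos hs i)
  have hbpow : b ^ (-(d : ℝ) / 2) = √b⁻¹ ^ d := by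
    rw [rpow_neg_natCast_div_two hb.le, sqrt_inv, inv_pow]
  have hshift : b⁻¹ + 1 + d ≤ (d + 2) * √b⁻¹ ^ 2 := by
    rw [sq_sqrt (by positivity)]
    nlinarith [(Nat.cast_nonneg d : (0 : ℝ) ≤ d)]
  have h4π : √(4 * π) = √2 * √(2 * π) := by
    rw [← sqrt_mul zero_le_two]
    ring_nf
  calc kappa d s b x
      ≤ ((d + 2) * √b⁻¹ ^ 2) ^ d *
          (2 * exp 1 * √b⁻¹ / ∏ i, √(2 * π * b⁻¹ * baryCoord s i)) := by
        refine (kappa_le_mul_Gamma_mul_prod hs hb hx).trans ?_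
        exact mul_le_mul_of_nonneg (pow_le_pow_left₀ (by positivity) hshift d)
          (Gamma_mul_prod_rpow_div_Gamma_le (baryCoord_pos hs) (sum_baryCoord s) hN)
          (by positivity) (by positivity)
    _ = 2 * exp 1 * (d + 2) ^ d * √2 ^ d / √(2 * π) * b ^ (-(d : ℝ) / 2) * psiFun d s := by
        simp_rw [sqrt_mul (by positivity : 0 ≤ 2 * π * b⁻¹),
          sqrt_mul (by positivity : 0 ≤ 2 * π) b⁻¹]
        rw [mul_pow, psiFun_eq_prod_baryCoord, hbpow, h4π, Finset.prod_mul_distrib,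
          Finset.prod_const, Finset.card_univ, Fintype.card_fin]
        have hr : 0 < √b⁻¹ := by positivity
        generalize √b⁻¹ = r at hr ⊢
        field_simp
        ring

end Simplex

/-- Lemma: uniform local bound on the Dirichlet kernel. -/
theorem dirichlet_kernel_sup_bound (d : ℕ) (hd : 1 ≤ d) :
    ∃ C : ℝ, 0 < C ∧ ∀ s ∈ SdInt d, ∃ b₀ : ℝ, 0 < b₀ ∧
      ∀ b : ℝ, 0 < b → b < b₀ → ∀ x ∈ Sd d,
        kappa d s b x ≤ C * b ^ (-(d : ℝ) / 2) * psiFun d s :=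
  ⟨2 * exp 1 * (d + 2) ^ d * √2 ^ d / √(2 * π), by positivity, fun _ hs ↦
    ⟨1, one_pos, fun _ hb hb1 _ hx ↦ dirichlet_kernel_sup_bound_general hs hb hb1.le hx⟩⟩
end

section
/- Let d ∈ ℕ, q ∈ (1,∞), b > 0, and s ∈ Int(S_d). Then the q-th power integral of the Dirichlet kernel admits the exact closed form ∫_{S_d} κ_{s,b}^q(x) dx = [Γ(q(1−‖s‖₁)/b + 1) ∏_{i=1}^d Γ(q s_i/b + 1)] / [Γ^q((1−‖s‖₁)/b + 1) ∏_{i=1}^d Γ^q(s_i/b + 1)] × Γ^q(1/b + d + 1) / Γ(q/b + d + 1). -/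
open MeasureTheory Filter Asymptotics Real Topology

/-! The `q`-th power of a Dirichlet density is, up to a constant, a Dirichlet density with
parameters `q * (uᵢ - 1) + 1` and `q * (v - 1) + 1`, so everything rests on the normalizing
constant. Let `F t` be the integral of `(t - ∑ xᵢ) ^ (v - 1) * ∏ xᵢ ^ (uᵢ - 1)` over the simplex of
size `t`. By Tonelli and the shift `t ↦ t + ∑ xᵢ`, the Laplace transform `∫ exp (-t) * F t` factors
as `Γ(v) ∏ Γ(uᵢ)`. Scaling gives `F t = t ^ (∑ uᵢ + v - 1) * F 1`, so it also equals
`Γ(∑ uᵢ + v) * F 1`. -/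

open Function Set
open scoped ENNReal

section ProductAndScaling

variable {ι : Type*} [Fintype ι]

theorem lintegral_fin_prod_eq_prod {n : ℕ} {X : Fin n → Type*} [∀ i, MeasurableSpace (X i)]
    (μ : ∀ i, Measure (X i)) [∀ i, SigmaFinite (μ i)] {f : ∀ i, X i → ℝ≥0∞}
    (hf : ∀ i, Measurable (f i)) :
    ∫⁻ x, ∏ i, f i (x i) ∂Measure.pi μ = ∏ i, ∫⁻ x, f i x ∂μ i := by
  induction n with
  | zero => simp
  | succ n ih =>
    rw [← (measurePreserving_piFinSuccAbove μ 0).symm.lintegral_comp_emb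
      (MeasurableEquiv.measurableEmbedding _)]
    simp_rw [MeasurableEquiv.piFinSuccAbove_symm_apply, Fin.insertNthEquiv_apply,
      Fin.prod_univ_succAbove _ 0, Fin.insertNth_apply_same, Fin.insertNth_apply_succAbove]
    have htail : Measurable fun x : ∀ i : Fin n, X (Fin.succAbove 0 i) =>
        ∏ i, f (Fin.succAbove 0 i) (x i) := by fun_prop
    rw [lintegral_prod_mul (hf 0).aemeasurable htail.aemeasurable,
      ih (fun i => μ (Fin.succAbove 0 i)) fun i => hf (Fin.succAbove 0 i)]

theorem lintegral_fintype_prod_eq_prod {X : ι → Type*} [∀ i, MeasurableSpace (X i)]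
    (μ : ∀ i, Measure (X i)) [∀ i, SigmaFinite (μ i)] {f : ∀ i, X i → ℝ≥0∞}
    (hf : ∀ i, Measurable (f i)) :
    ∫⁻ x, ∏ i, f i (x i) ∂Measure.pi μ = ∏ i, ∫⁻ x, f i x ∂μ i := by
  let e := (Fintype.equivFin ι).symm
  rw [← (measurePreserving_piCongrLeft μ e).lintegral_comp_emb
    (MeasurableEquiv.measurableEmbedding _)]
  simp_rw [← e.prod_comp, MeasurableEquiv.coe_piCongrLeft, Equiv.piCongrLeft_apply_apply]
  exact lintegral_fin_prod_eq_prod (fun i => μ (e i)) fun i => hf (e i)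

theorem lintegral_comp_smul {E : Type*} [NormedAddCommGroup E] [NormedSpace ℝ E]
    [MeasurableSpace E] [BorelSpace E] [FiniteDimensional ℝ E] (μ : Measure E)
    [μ.IsAddHaarMeasure] (f : E → ℝ≥0∞) {r : ℝ} (hr : r ≠ 0) :
    ∫⁻ x, f (r • x) ∂μ = ENNReal.ofReal |(r ^ Module.finrank ℝ E)⁻¹| * ∫⁻ x, f x ∂μ := by
  rw [← smul_eq_mul, ← lintegral_smul_measure, ← Measure.map_addHaar_smul μ hr]
  exact ((Homeomorph.smulOfNeZero r hr).measurableEmbedding.lintegral_map f).symm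

end ProductAndScaling

/-- The truncated power `x₊ ^ a`, vanishing for `x < 0`. It takes values in `ℝ≥0∞` so that Tonelli's
theorem applies to products of truncated powers without integrability conditions. -/
noncomputable def truncPow (a x : ℝ) : ℝ≥0∞ :=
  (Ici 0).indicator (fun x => ENNReal.ofReal (x ^ a)) x

section TruncPow

variable {a x : ℝ}

@[fun_prop]
theorem measurable_truncPow (a : ℝ) : Measurable (truncPow a) :=
  Measurable.indicator (by fun_prop) measurableSet_Ici

theorem truncPow_of_nonneg (hx : 0 ≤ x) : truncPow a x = ENNReal.ofReal (x ^ a) :=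
  indicator_of_mem (mem_Ici.2 hx) _

theorem truncPow_of_neg (hx : x < 0) : truncPow a x = 0 :=
  indicator_of_notMem (notMem_Ici.2 hx) _

theorem truncPow_mul {c : ℝ} (hc : 0 < c) (a x : ℝ) :
    truncPow a (c * x) = ENNReal.ofReal (c ^ a) * truncPow a x := by
  rcases lt_or_ge x 0 with hx | hx
  · rw [truncPow_of_neg hx, truncPow_of_neg (mul_neg_of_pos_of_neg hc hx), mul_zero]
  · rw [truncPow_of_nonneg hx, truncPow_of_nonneg (mul_nonneg hc.le hx), mul_rpow hc.le hx,
      ENNReal.ofReal_mul (by positivity)]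

theorem lintegral_exp_neg_mul_truncPow (ha : 0 < a) :
    ∫⁻ x, ENNReal.ofReal (exp (-x)) * truncPow (a - 1) x = ENNReal.ofReal (Gamma a) := by
  have hind (x : ℝ) : ENNReal.ofReal (exp (-x)) * truncPow (a - 1) x =
      (Ici 0).indicator (fun x => ENNReal.ofReal (exp (-x) * x ^ (a - 1))) x := by
    simp only [ENNReal.ofReal_mul (exp_nonneg _), indicator_mul_right, truncPow]
  simp_rw [hind]
  rw [lintegral_indicator measurableSet_Ici, setLIntegral_congr Ioi_ae_eq_Ici.symm,
    Gamma_eq_integral ha, ofReal_integral_eq_lintegral_ofReal (GammaIntegral_convergent ha)]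
  filter_upwards [ae_restrict_mem measurableSet_Ioi] with x hx
  exact mul_nonneg (exp_nonneg _) (rpow_nonneg hx.le _)

end TruncPow

section DirichletIntegral

variable {ι : Type*} [Fintype ι] {u : ι → ℝ} {v : ℝ}

/-- The solid simplex `{x ∈ ℝ^ι : x ≥ 0, ∑ xᵢ ≤ 1}`. -/
def solidSimplex (ι : Type*) [Fintype ι] : Set (ι → ℝ) :=
  {x | (∀ i, 0 ≤ x i) ∧ ∑ i, x i ≤ 1}

/-- The multivariate beta function `B(u, v) = Γ(v) ∏ Γ(uᵢ) / Γ(∑ uᵢ + v)`, the reciprocal of the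
normalizing constant of the Dirichlet density `dirK`. -/
noncomputable def multivariateBeta (u : ι → ℝ) (v : ℝ) : ℝ :=
  Gamma v * (∏ i, Gamma (u i)) / Gamma (∑ i, u i + v)

/-- The unnormalized Dirichlet density `(t - ∑ xᵢ) ^ (v - 1) * ∏ xᵢ ^ (uᵢ - 1)` on the solid simplex
of size `t`, extended by zero. -/
noncomputable def dirichletWeight (u : ι → ℝ) (v t : ℝ) (x : ι → ℝ) : ℝ≥0∞ :=
  truncPow (v - 1) (t - ∑ i, x i) * ∏ i, truncPow (u i - 1) (x i)

theorem measurableSet_solidSimplex : MeasurableSet (solidSimplex ι) := by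
  simp only [solidSimplex, measurableSet_setOfPred]
  fun_prop

theorem multivariateBeta_pos (hu : ∀ i, 0 < u i) (hv : 0 < v) : 0 < multivariateBeta u v :=
  div_pos (mul_pos (Gamma_pos_of_pos hv) (Finset.prod_pos fun i _ => Gamma_pos_of_pos (hu i)))
    (Gamma_pos_of_pos (add_pos_of_nonneg_of_pos (Finset.sum_nonneg fun i _ => (hu i).le) hv))

theorem measurable_uncurry_dirichletWeight (u : ι → ℝ) (v : ℝ) :
    Measurable (uncurry (dirichletWeight u v)) := by
  unfold dirichletWeight uncurry
  fun_prop

theorem dirichletWeight_one_eq_indicator (u : ι → ℝ) (v : ℝ) (x : ι → ℝ) :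
    dirichletWeight u v 1 x = (solidSimplex ι).indicator
      (fun x => ENNReal.ofReal ((1 - ∑ i, x i) ^ (v - 1) * ∏ i, x i ^ (u i - 1))) x := by
  rw [dirichletWeight]
  by_cases hx : x ∈ solidSimplex ι
  · have hr : 0 ≤ 1 - ∑ i, x i := sub_nonneg.2 hx.2
    rw [indicator_of_mem hx, truncPow_of_nonneg hr, ENNReal.ofReal_mul (rpow_nonneg hr _),
      ENNReal.ofReal_prod_of_nonneg fun i _ => rpow_nonneg (hx.1 i) _]
    simp_rw [truncPow_of_nonneg (hx.1 _)]
  · rw [indicator_of_notMem hx, mul_eq_zero, or_iff_not_imp_left]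
    intro hsum
    have hle : ∑ i, x i ≤ 1 := by
      by_contra! hlt
      exact hsum (truncPow_of_neg (sub_neg.2 hlt))
    obtain ⟨i, hi⟩ : ∃ i, x i < 0 := by
      by_contra! hx0
      exact hx ⟨hx0, hle⟩
    exact Finset.prod_eq_zero (Finset.mem_univ i) (truncPow_of_neg hi)

theorem dirichletWeight_of_neg {t : ℝ} (ht : t < 0) (u : ι → ℝ) (v : ℝ) (x : ι → ℝ) :
    dirichletWeight u v t x = 0 := by
  rw [dirichletWeight, mul_eq_zero, or_iff_not_imp_right]
  intro hprod
  have hx (i : ι) : 0 ≤ x i := by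
    by_contra! hi
    exact hprod (Finset.prod_eq_zero (Finset.mem_univ i) (truncPow_of_neg hi))
  exact truncPow_of_neg (by linarith [Finset.sum_nonneg fun i (_ : i ∈ Finset.univ) => hx i])

theorem dirichletWeight_smul {t : ℝ} (ht : 0 < t) (u : ι → ℝ) (v : ℝ) (x : ι → ℝ) :
    dirichletWeight u v t (t • x) =
      ENNReal.ofReal (t ^ (v - 1 + ∑ i, (u i - 1))) * dirichletWeight u v 1 x := by
  have hrest : t - ∑ i, t * x i = t * (1 - ∑ i, x i) := by rw [← Finset.mul_sum]; ring
  simp only [dirichletWeight, Pi.smul_apply, smul_eq_mul, hrest, truncPow_mul ht,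
    Finset.prod_mul_distrib]
  rw [rpow_add ht, rpow_sum_of_pos ht, ENNReal.ofReal_mul (by positivity),
    ENNReal.ofReal_prod_of_nonneg fun i _ => by positivity]
  ring

theorem lintegral_dirichletWeight (u : ι → ℝ) (v : ℝ) {t : ℝ} (ht : t ≠ 0) :
    ∫⁻ x, dirichletWeight u v t x =
      truncPow (∑ i, u i + v - 1) t * ∫⁻ x, dirichletWeight u v 1 x := by
  rcases ht.lt_or_gt with ht | ht
  · simp only [dirichletWeight_of_neg ht, truncPow_of_neg ht, lintegral_zero, zero_mul]
  have hexp : t ^ (v - 1 + ∑ i, (u i - 1)) * t ^ Fintype.card ι = t ^ (∑ i, u i + v - 1) := by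
    rw [← rpow_add_natCast ht.ne', Finset.sum_sub_distrib, Finset.sum_const, Finset.card_univ,
      nsmul_one]
    congr 1
    ring
  calc ∫⁻ x, dirichletWeight u v t x
      = ∫⁻ x, ENNReal.ofReal (t ^ (v - 1 + ∑ i, (u i - 1))) *
          dirichletWeight u v 1 (t⁻¹ • x) := by
        simp_rw [← dirichletWeight_smul ht, smul_inv_smul₀ ht.ne']
    _ = ENNReal.ofReal (t ^ (v - 1 + ∑ i, (u i - 1))) *
          (ENNReal.ofReal (t ^ Fintype.card ι) * ∫⁻ x, dirichletWeight u v 1 x) := by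
        rw [lintegral_const_mul' _ _ ENNReal.ofReal_ne_top,
          lintegral_comp_smul volume _ (inv_ne_zero ht.ne'), Module.finrank_fintype_fun_eq_card,
          inv_pow, inv_inv, abs_of_pos (pow_pos ht _)]
    _ = truncPow (∑ i, u i + v - 1) t * ∫⁻ x, dirichletWeight u v 1 x := by
        rw [← mul_assoc, ← ENNReal.ofReal_mul (by positivity), hexp, truncPow_of_nonneg ht.le]

theorem lintegral_exp_neg_mul_dirichletWeight (u : ι → ℝ) (hv : 0 < v) (x : ι → ℝ) :
    ∫⁻ t, ENNReal.ofReal (exp (-t)) * dirichletWeight u v t x =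
      ENNReal.ofReal (Gamma v) *
        ∏ i, ENNReal.ofReal (exp (-x i)) * truncPow (u i - 1) (x i) := by
  have hshift (t : ℝ) :
      ENNReal.ofReal (exp (-(t + ∑ i, x i))) * dirichletWeight u v (t + ∑ i, x i) x =
        (ENNReal.ofReal (exp (-t)) * truncPow (v - 1) t) *
          ∏ i, ENNReal.ofReal (exp (-x i)) * truncPow (u i - 1) (x i) := by
    rw [dirichletWeight, add_sub_cancel_right, neg_add, exp_add, ← Finset.sum_neg_distrib, exp_sum,
      ENNReal.ofReal_mul (exp_nonneg _), ENNReal.ofReal_prod_of_nonneg fun i _ => exp_nonneg _,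
      Finset.prod_mul_distrib]
    ring
  rw [← lintegral_add_right_eq_self _ (∑ i, x i)]
  simp_rw [hshift]
  rw [lintegral_mul_const _ (by fun_prop), lintegral_exp_neg_mul_truncPow hv]

theorem lintegral_exp_neg_mul_lintegral_dirichletWeight (hu : ∀ i, 0 < u i) (hv : 0 < v) :
    ∫⁻ t, ENNReal.ofReal (exp (-t)) * ∫⁻ x, dirichletWeight u v t x =
      ENNReal.ofReal (Gamma v * ∏ i, Gamma (u i)) := by
  have hmeas := measurable_uncurry_dirichletWeight u v
  calc ∫⁻ t, ENNReal.ofReal (exp (-t)) * ∫⁻ x, dirichletWeight u v t x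
      = ∫⁻ t, ∫⁻ x, ENNReal.ofReal (exp (-t)) * dirichletWeight u v t x := by
        simp_rw [lintegral_const_mul' _ _ ENNReal.ofReal_ne_top]
    _ = ∫⁻ x, ∫⁻ t, ENNReal.ofReal (exp (-t)) * dirichletWeight u v t x :=
        lintegral_lintegral_swap
          (((by fun_prop : Measurable fun z : ℝ × (ι → ℝ) => ENNReal.ofReal (exp (-z.1))).mul
            hmeas).aemeasurable)
    _ = ENNReal.ofReal (Gamma v) *
          ∫⁻ x : ι → ℝ, ∏ i, ENNReal.ofReal (exp (-x i)) * truncPow (u i - 1) (x i) := by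
        simp_rw [lintegral_exp_neg_mul_dirichletWeight u hv]
        rw [lintegral_const_mul' _ _ ENNReal.ofReal_ne_top]
    _ = ENNReal.ofReal (Gamma v) * ∏ i, ENNReal.ofReal (Gamma (u i)) := by
        have hfactor (i : ι) :
            Measurable fun y => ENNReal.ofReal (exp (-y)) * truncPow (u i - 1) y := by fun_prop
        rw [volume_pi, lintegral_fintype_prod_eq_prod (fun _ => volume) hfactor]
        simp_rw [lintegral_exp_neg_mul_truncPow (hu _)]
    _ = ENNReal.ofReal (Gamma v * ∏ i, Gamma (u i)) := by
        rw [ENNReal.ofReal_mul (Gamma_pos_of_pos hv).le,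
          ENNReal.ofReal_prod_of_nonneg fun i _ => (Gamma_pos_of_pos (hu i)).le]

theorem lintegral_dirichletWeight_one (hu : ∀ i, 0 < u i) (hv : 0 < v) :
    ∫⁻ x, dirichletWeight u v 1 x = ENNReal.ofReal (multivariateBeta u v) := by
  have hsum : 0 < ∑ i, u i + v :=
    add_pos_of_nonneg_of_pos (Finset.sum_nonneg fun i _ => (hu i).le) hv
  have hΓ := Gamma_pos_of_pos hsum
  have hlaplace :
      ENNReal.ofReal (Gamma (∑ i, u i + v)) * ∫⁻ x, dirichletWeight u v 1 x =
        ENNReal.ofReal (Gamma v * ∏ i, Gamma (u i)) := by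
    rw [← lintegral_exp_neg_mul_lintegral_dirichletWeight hu hv,
      ← lintegral_exp_neg_mul_truncPow hsum, ← lintegral_mul_const _ (by fun_prop)]
    refine lintegral_congr_ae ?_
    filter_upwards [Measure.ae_ne volume 0] with t ht
    rw [lintegral_dirichletWeight u v ht, mul_assoc]
  rw [multivariateBeta, ENNReal.ofReal_div_of_pos hΓ, ← hlaplace,
    mul_comm, ENNReal.mul_div_cancel_right (by simpa using hΓ) ENNReal.ofReal_ne_top]

theorem setIntegral_solidSimplex (hu : ∀ i, 0 < u i) (hv : 0 < v) :
    ∫ x in solidSimplex ι, (1 - ∑ i, x i) ^ (v - 1) * ∏ i, x i ^ (u i - 1) =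
      multivariateBeta u v := by
  rw [integral_eq_lintegral_of_nonneg_ae _ (by fun_prop),
    ← lintegral_indicator measurableSet_solidSimplex]
  · simp_rw [← dirichletWeight_one_eq_indicator]
    rw [lintegral_dirichletWeight_one hu hv, ENNReal.toReal_ofReal (multivariateBeta_pos hu hv).le]
  · filter_upwards [ae_restrict_mem measurableSet_solidSimplex] with x hx
    exact mul_nonneg (rpow_nonneg (sub_nonneg.2 hx.2) _)
      (Finset.prod_nonneg fun i _ => rpow_nonneg (hx.1 i) _)

end DirichletIntegral

section DirichletDensity

variable {d : ℕ}

theorem Sd_eq_solidSimplex (d : ℕ) : Sd d = solidSimplex (Fin d) := by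
  ext x
  have habs (hx : ∀ i, 0 ≤ x i) : ∑ i, |x i| = ∑ i, x i :=
    Finset.sum_congr rfl fun i _ => abs_of_nonneg (hx i)
  constructor
  · rintro ⟨hIcc, hsum⟩
    have hnonneg (i : Fin d) : 0 ≤ x i := (hIcc i).1
    exact ⟨hnonneg, habs hnonneg ▸ hsum⟩
  · rintro ⟨hnonneg, hsum⟩
    have hle (i : Fin d) : x i ≤ ∑ j, x j :=
      Finset.single_le_sum (fun j _ => hnonneg j) (Finset.mem_univ i)
    exact ⟨fun i => ⟨hnonneg i, (hle i).trans hsum⟩, (habs hnonneg).symm ▸ hsum⟩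

theorem SdInt_subset_Sd (d : ℕ) : SdInt d ⊆ Sd d :=
  fun _ ⟨hIoo, hsum⟩ => ⟨fun i => Ioo_subset_Icc_self (hIoo i), hsum.le⟩

theorem dirK_eq_inv_multivariateBeta_mul (u : Fin d → ℝ) (v : ℝ) (x : Fin d → ℝ) :
    dirK d u v x =
      (multivariateBeta u v)⁻¹ * ((1 - ∑ i, x i) ^ (v - 1) * ∏ i, x i ^ (u i - 1)) := by
  rw [dirK, multivariateBeta, inv_div, mul_assoc]

theorem dirK_rpow {u : Fin d → ℝ} {v : ℝ} (hB : 0 ≤ multivariateBeta u v) {x : Fin d → ℝ}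
    (hx : x ∈ solidSimplex (Fin d)) (q : ℝ) :
    dirK d u v x ^ q = (multivariateBeta u v ^ q)⁻¹ *
      ((1 - ∑ i, x i) ^ (q * (v - 1)) * ∏ i, x i ^ (q * (u i - 1))) := by
  have hrest : 0 ≤ 1 - ∑ i, x i := sub_nonneg.2 hx.2
  have hfactor : ∀ i ∈ Finset.univ, 0 ≤ x i ^ (u i - 1) := fun i _ => rpow_nonneg (hx.1 i) _
  rw [dirK_eq_inv_multivariateBeta_mul,
    mul_rpow (inv_nonneg.2 hB) (mul_nonneg (rpow_nonneg hrest _) (Finset.prod_nonneg hfactor)),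
    mul_rpow (rpow_nonneg hrest _) (Finset.prod_nonneg hfactor), inv_rpow hB,
    ← finsetProd_rpow _ _ hfactor]
  simp_rw [← rpow_mul hrest, ← rpow_mul (hx.1 _), mul_comm _ q]

theorem setIntegral_dirK_rpow {u : Fin d → ℝ} {v q : ℝ} (hu : ∀ i, 0 < u i) (hv : 0 < v)
    (hqu : ∀ i, 0 < q * (u i - 1) + 1) (hqv : 0 < q * (v - 1) + 1) :
    ∫ x in Sd d, dirK d u v x ^ q =
      multivariateBeta (fun i => q * (u i - 1) + 1) (q * (v - 1) + 1) /
        multivariateBeta u v ^ q := by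
  rw [Sd_eq_solidSimplex, setIntegral_congr_fun measurableSet_solidSimplex fun x hx =>
    dirK_rpow (multivariateBeta_pos hu hv).le hx q, integral_const_mul, div_eq_inv_mul,
    ← setIntegral_solidSimplex hqu hqv]
  simp only [add_sub_cancel_right]

end DirichletDensity

theorem multivariateBeta_mul_div_add_one {d : ℕ} (s : Fin d → ℝ) (b q : ℝ) :
    multivariateBeta (fun i => q * s i / b + 1) (q * (1 - ∑ i, s i) / b + 1) =
      Gamma (q * (1 - ∑ i, s i) / b + 1) * (∏ i, Gamma (q * s i / b + 1)) /
        Gamma (q / b + d + 1) := by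
  have hsum : ∑ i, (q * s i / b + 1) + (q * (1 - ∑ i, s i) / b + 1) = q / b + d + 1 := by
    rw [Finset.sum_add_distrib, ← Finset.sum_div, ← Finset.mul_sum, Finset.sum_const,
      Finset.card_univ, Fintype.card_fin, nsmul_one]
    ring
  rw [multivariateBeta, hsum]

theorem dirichlet_kernel_q_power_integral_general (d : ℕ) (q b : ℝ) (hb : 0 < b) (s : Fin d → ℝ)
    (hs : s ∈ Sd d) (hqs : ∀ i, 0 < q * s i / b + 1) (hqr : 0 < q * (1 - ∑ i, s i) / b + 1) :
    ∫ x in Sd d, (kappa d s b x) ^ q =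
      (Real.Gamma (q * (1 - ∑ i, s i) / b + 1) * ∏ i, Real.Gamma (q * s i / b + 1)) /
          (Real.Gamma ((1 - ∑ i, s i) / b + 1) ^ q * ∏ i, Real.Gamma (s i / b + 1) ^ q) *
        (Real.Gamma (1 / b + d + 1) ^ q / Real.Gamma (q / b + d + 1)) := by
  rw [Sd_eq_solidSimplex] at hs
  have hu (i : Fin d) : 0 < s i / b + 1 := by have := hs.1 i; positivity
  have hv : 0 < (1 - ∑ i, s i) / b + 1 := by have := sub_nonneg.2 hs.2; positivity
  have hΓu (i : Fin d) : 0 ≤ Gamma (s i / b + 1) := (Gamma_pos_of_pos (hu i)).le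
  have hΓv : 0 ≤ Gamma ((1 - ∑ i, s i) / b + 1) := (Gamma_pos_of_pos hv).le
  have hprod : 0 ≤ ∏ i, Gamma (s i / b + 1) := Finset.prod_nonneg fun i _ => hΓu i
  have hint := setIntegral_dirK_rpow hu hv (q := q) (by simpa [mul_div_assoc] using hqs)
    (by simpa [mul_div_assoc] using hqr)
  have hB := multivariateBeta_mul_div_add_one s b 1
  simp only [add_sub_cancel_right, ← mul_div_assoc] at hint
  simp only [one_mul] at hB
  simp only [kappa]
  rw [hint, multivariateBeta_mul_div_add_one, hB, div_rpow (mul_nonneg hΓv hprod) (by positivity),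
    mul_rpow hΓv hprod, ← finsetProd_rpow _ _ fun i _ => hΓu i, div_div_div_eq,
    mul_comm (Gamma (q / b + d + 1)), mul_div_mul_comm]

/-- Exact closed form of the q-th power integral of the Dirichlet kernel. -/
theorem dirichlet_kernel_q_power_integral (d : ℕ) (hd : 1 ≤ d) (q : ℝ) (hq : 1 < q)
    (b : ℝ) (hb : 0 < b) (s : Fin d → ℝ) (hs : s ∈ SdInt d) :
    ∫ x in Sd d, (kappa d s b x) ^ q =
      (Real.Gamma (q * (1 - ∑ i, s i) / b + 1) * ∏ i, Real.Gamma (q * s i / b + 1)) /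
          (Real.Gamma ((1 - ∑ i, s i) / b + 1) ^ q * ∏ i, Real.Gamma (s i / b + 1) ^ q) *
        (Real.Gamma (1 / b + d + 1) ^ q / Real.Gamma (q / b + d + 1)) := by
  obtain ⟨hnonneg, hsum⟩ := Sd_eq_solidSimplex d ▸ SdInt_subset_Sd d hs
  exact dirichlet_kernel_q_power_integral_general d q b hb s (SdInt_subset_Sd d hs)
    (fun i => by have := hnonneg i; positivity) (by have := sub_nonneg.2 hsum; positivity)
end

section
/- Let d ∈ ℕ and let (X_i)_{i∈ℕ} be a strictly stationary sequence of S_d-valued random vectors satisfying assumption (A2): for some p ∈ (2,∞), sup_{i≠j} (∫_{S_d×S_d} |h_{i,j}(x,x′)|^p dx dx′)^{1/p} < ∞, where h_{i,j} = f_{X_i,X_j} − f_{X_i} f_{X_j}. Let q ∈ (1,2) satisfy 1/p + 1/q = 1, let s ∈ Int(S_d), let b = b(n) → 0, and let (β_n) be integers with 1 ≤ β_n ≤ n−1. Then the near-diagonal covariance sum C_{1,n} = Σ_{1 ≤ |i−j| ≤ β_n, 1 ≤ i,j ≤ n} Cov(κ_{s,b}(X_i), κ_{s,b}(X_j)) satisfies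 |C_{1,n}| ≪_s n β_n b^{−d/p} as n → ∞. -/
open MeasureTheory Filter Asymptotics Real Topology

/-!
With `h = f_{Y,Z} - f_Y f_Z`, the covariance of `κ(Y)` and `κ(Z)` is the integral of `(κ ⊗ κ) h`
over `S_d × S_d`, so by Hölder's inequality it is at most `‖κ‖_q² ‖h‖_p`. There are at most
`2 n β_n` near-diagonal pairs, and it remains to see that `‖κ_{s,b}‖_q` is `O(b^{-d/(2p)})`.

In barycentric coordinates `κ_{s,b}(x)` is a normalising constant times `(∏ x_i ^ s_i) ^ (1/b)`. By
Gibbs' inequality sharpened by a quadratic term, `∏ x_i ^ s_i ≤ (∏ s_i ^ s_i) exp (-|x - s|² / 4)`,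
and by Stirling's formula the constant times `(∏ s_i ^ s_i) ^ (1/b)` is `O(b^{-d/2})`. So the
kernel is dominated by a Gaussian of variance `2b`, whose `L^q` norm is computed exactly.

The densities are not assumed measurable or nonnegative. The first step is therefore carried out
with measures: the joint law and the product of the marginal laws each exceed the other by at most
the measure with density `|h|`.
-/

namespace NearDiagonalCovariance

section NonmeasurableDensities

variable {α β : Type*} [MeasurableSpace α] [MeasurableSpace β] {ν : Measure α} {η : Measure β}

lemma lintegral_prod_mul_of_ne_top [SFinite η] {F : α → ENNReal} {G : β → ENNReal}
    (hF : ∀ x, F x ≠ ⊤) (hG : ∫⁻ y, G y ∂η ≠ ⊤) :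
    ∫⁻ z, F z.1 * G z.2 ∂(ν.prod η) = (∫⁻ x, F x ∂ν) * ∫⁻ y, G y ∂η := by
  refine le_antisymm ?_ ?_
  · calc ∫⁻ z, F z.1 * G z.2 ∂(ν.prod η) ≤ ∫⁻ x, ∫⁻ y, F x * G y ∂η ∂ν := lintegral_prod_le _
      _ = (∫⁻ x, F x ∂ν) * ∫⁻ y, G y ∂η := by
        simp only [lintegral_const_mul' _ _ (hF _), lintegral_mul_const' _ _ hG]
  -- As `∫⁻` is a lower integral, Tonelli's equality can be applied to measurable minorants.
  · obtain ⟨F₀, hF₀, hF₀F, hF₀_eq⟩ := exists_measurable_le_lintegral_eq ν F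
    obtain ⟨G₀, hG₀, hG₀G, hG₀_eq⟩ := exists_measurable_le_lintegral_eq η G
    rw [hF₀_eq, hG₀_eq, ← lintegral_prod_mul hF₀.aemeasurable hG₀.aemeasurable]
    exact lintegral_mono fun z => mul_le_mul' (hF₀F z.1) (hG₀G z.2)

lemma prod_withDensity_of_ne_top [SFinite ν] [SFinite η] {F : α → ENNReal} {G : β → ENNReal}
    (hF : ∀ x, F x ≠ ⊤) [IsFiniteMeasure (ν.withDensity F)] [IsFiniteMeasure (η.withDensity G)] :
    (ν.withDensity F).prod (η.withDensity G) =
      (ν.prod η).withDensity fun z => F z.1 * G z.2 := by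
  refine Measure.prod_eq fun s t hs ht => ?_
  have hG : ∫⁻ y in t, G y ∂η ≠ ⊤ := by
    rw [← withDensity_apply _ ht]
    exact measure_ne_top _ _
  rw [withDensity_apply _ (hs.prod ht), withDensity_apply _ hs, withDensity_apply _ ht,
    ← Measure.prod_restrict, lintegral_prod_mul_of_ne_top hF hG]

lemma exists_measurableSet_withDensity_compl_eq_zero [SFinite ν] (F : α → ENNReal) :
    ∃ A, MeasurableSet A ∧ (∀ x ∈ A, F x ≠ 0) ∧ ν.withDensity F Aᶜ = 0 := by
  obtain ⟨g, hg, hgF, hg_eq⟩ := exists_measurable_le_forall_setLIntegral_eq ν F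
  have hA : MeasurableSet {x | g x ≠ 0} := (hg (measurableSet_singleton 0)).compl
  refine ⟨{x | g x ≠ 0}, hA, fun x hx hFx => hx (le_zero_iff.mp (hFx ▸ hgF x)), ?_⟩
  rw [withDensity_apply _ hA.compl, hg_eq,
    setLIntegral_congr_fun hA.compl (g := 0) fun x hx => not_not.mp hx]
  exact lintegral_zero

lemma withDensity_ofReal_le_add {u v : α → ℝ} (h : AEMeasurable (fun x => |u x - v x|) ν) :
    ν.withDensity (fun x => ENNReal.ofReal (u x)) ≤
      ν.withDensity (fun x => ENNReal.ofReal (v x)) +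
        ν.withDensity (fun x => ENNReal.ofReal |u x - v x|) := by
  obtain ⟨w, hw, hw_eq⟩ := h.ennreal_ofReal
  rw [withDensity_congr_ae hw_eq, ← withDensity_add_right _ hw]
  refine withDensity_mono ?_
  filter_upwards [hw_eq] with x hx
  rw [Pi.add_apply, ← hx]
  calc ENNReal.ofReal (u x) ≤ ENNReal.ofReal (v x + |u x - v x|) :=
        ENNReal.ofReal_le_ofReal (by linarith [le_abs_self (u x - v x)])
    _ ≤ ENNReal.ofReal (v x) + ENNReal.ofReal |u x - v x| := ENNReal.ofReal_add_le

lemma restrict_prod_eq_self {τ : Measure (α × β)} {A : Set α} {B : Set β}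
    (hA : MeasurableSet A) (hB : MeasurableSet B) (hfst : τ.fst Aᶜ = 0) (hsnd : τ.snd Bᶜ = 0) :
    τ.restrict (A ×ˢ B) = τ := by
  rw [Measure.fst_apply hA.compl, measure_eq_zero_iff_ae_notMem] at hfst
  rw [Measure.snd_apply hB.compl, measure_eq_zero_iff_ae_notMem] at hsnd
  refine Measure.restrict_eq_self_of_ae_mem ?_
  filter_upwards [hfst, hsnd] with z hz₁ hz₂
  exact ⟨not_not.mp hz₁, not_not.mp hz₂⟩

end NonmeasurableDensities

section LocalDependence

variable {α β : Type*} [MeasurableSpace α] [MeasurableSpace β] {ν : Measure α} {η : Measure β}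

/-- The local dependence function `h = f_{Y,Z} - f_Y f_Z` of a pair of random variables `Y, Z`
with joint density `k` and marginal densities `f`, `g`. -/
def localDependence (k : α × β → ℝ) (f : α → ℝ) (g : β → ℝ) (z : α × β) : ℝ :=
  k z - f z.1 * g z.2

/-- The measure `|h(z)| dz` on `S × T`, where `h` is the local dependence function. It dominates
the difference between the joint law and the product of its marginals. -/
noncomputable def dependenceMeasure (ν : Measure α) (η : Measure β) (S : Set α) (T : Set β)
    (k : α × β → ℝ) (f : α → ℝ) (g : β → ℝ) : Measure (α × β) :=
  ((ν.prod η).restrict (S ×ˢ T)).withDensity fun z => ENNReal.ofReal |localDependence k f g z|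

-- `f` and `g` may be negative, where `ENNReal.ofReal` is not multiplicative; the rectangle is
-- chosen so that both are positive on it.
lemma exists_rectangle_carrying_joint_and_prod [SFinite ν] [SFinite η] {S : Set α} {T : Set β}
    {f : α → ℝ} {g : β → ℝ} {ρ : Measure (α × β)} [IsFiniteMeasure ρ]
    (hf : ∀ x ∉ S, f x = 0) (hg : ∀ y ∉ T, g y = 0)
    (hfst : ρ.fst = ν.withDensity fun x => ENNReal.ofReal (f x))
    (hsnd : ρ.snd = η.withDensity fun y => ENNReal.ofReal (g y)) :
    ∃ R ⊆ S ×ˢ T, MeasurableSet R ∧ ρ.restrict R = ρ ∧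
      ρ.fst.prod ρ.snd =
        ((ν.prod η).restrict R).withDensity fun z => ENNReal.ofReal (f z.1 * g z.2) := by
  obtain ⟨A, hA, hAf, hA_zero⟩ := exists_measurableSet_withDensity_compl_eq_zero (ν := ν)
    fun x => ENNReal.ofReal (f x)
  obtain ⟨B, hB, hBg, hB_zero⟩ := exists_measurableSet_withDensity_compl_eq_zero (ν := η)
    fun y => ENNReal.ofReal (g y)
  replace hAf : ∀ x ∈ A, 0 < f x := fun x hx => by simpa using hAf x hx
  replace hBg : ∀ y ∈ B, 0 < g y := fun y hy => by simpa using hBg y hy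
  rw [← hfst] at hA_zero
  rw [← hsnd] at hB_zero
  refine ⟨A ×ˢ B, Set.prod_mono (fun x hx => not_imp_comm.mp (hf x) (hAf x hx).ne')
    (fun y hy => not_imp_comm.mp (hg y) (hBg y hy).ne'), hA.prod hB,
    restrict_prod_eq_self hA hB hA_zero hB_zero, ?_⟩
  have : IsFiniteMeasure (ν.withDensity fun x => ENNReal.ofReal (f x)) := hfst ▸ inferInstance
  have : IsFiniteMeasure (η.withDensity fun y => ENNReal.ofReal (g y)) := hsnd ▸ inferInstance
  calc ρ.fst.prod ρ.snd = (ρ.fst.prod ρ.snd).restrict (A ×ˢ B) := by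
        rw [← Measure.prod_restrict, Measure.restrict_eq_self_of_ae_mem hA_zero,
          Measure.restrict_eq_self_of_ae_mem hB_zero]
    _ = ((ν.prod η).restrict (A ×ˢ B)).withDensity
          fun z => ENNReal.ofReal (f z.1) * ENNReal.ofReal (g z.2) := by
        rw [hfst, hsnd, prod_withDensity_of_ne_top fun _ => ENNReal.ofReal_ne_top,
          restrict_withDensity (hA.prod hB)]
    _ = _ := by
        refine withDensity_congr_ae ?_
        filter_upwards [ae_restrict_mem (hA.prod hB)] with z hz
        exact (ENNReal.ofReal_mul (hAf _ hz.1).le).symm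

lemma joint_le_prod_add_and_prod_le_joint_add [SFinite ν] [SFinite η] {S : Set α} {T : Set β}
    {k : α × β → ℝ} {f : α → ℝ} {g : β → ℝ} {ρ : Measure (α × β)} [IsFiniteMeasure ρ]
    (hf : ∀ x ∉ S, f x = 0) (hg : ∀ y ∉ T, g y = 0)
    (hk : ρ = (ν.prod η).withDensity fun z => ENNReal.ofReal (k z))
    (hfst : ρ.fst = ν.withDensity fun x => ENNReal.ofReal (f x))
    (hsnd : ρ.snd = η.withDensity fun y => ENNReal.ofReal (g y))
    (hmeas : AEMeasurable (fun z => |localDependence k f g z|) ((ν.prod η).restrict (S ×ˢ T))) :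
    ρ ≤ ρ.fst.prod ρ.snd + dependenceMeasure ν η S T k f g ∧
      ρ.fst.prod ρ.snd ≤ ρ + dependenceMeasure ν η S T k f g := by
  obtain ⟨R, hRST, hR, hρR, hprod⟩ := exists_rectangle_carrying_joint_and_prod hf hg hfst hsnd
  have hρ : ρ = ((ν.prod η).restrict R).withDensity fun z => ENNReal.ofReal (k z) := by
    rw [← restrict_withDensity hR, ← hk, hρR]
  have hmeasR := hmeas.mono_measure (Measure.restrict_mono_set _ hRST)
  have hdep : ((ν.prod η).restrict R).withDensity
      (fun z => ENNReal.ofReal |localDependence k f g z|) ≤ dependenceMeasure ν η S T k f g :=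
    Measure.le_iff.mpr fun E hE => by
      rw [dependenceMeasure, withDensity_apply _ hE, withDensity_apply _ hE]
      gcongr
  rw [hprod]
  constructor
  · conv_lhs => rw [hρ]
    exact (withDensity_ofReal_le_add hmeasR).trans (by gcongr; exact hdep)
  · conv_rhs => rw [hρ]
    refine (withDensity_ofReal_le_add ?_).trans (add_le_add_right (le_of_eq_of_le ?_ hdep) _)
    · simpa only [localDependence, abs_sub_comm (k _)] using hmeasR
    · simp only [localDependence, abs_sub_comm (k _)]

lemma integral_le_integral_add_of_le_add {ρ τ μ : Measure α} (hρ : ρ ≤ τ + μ) {φ : α → ℝ}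
    (hφ : 0 ≤ φ) (hφτ : Integrable φ τ) (hφμ : Integrable φ μ) :
    ∫ x, φ x ∂ρ ≤ ∫ x, φ x ∂τ + ∫ x, φ x ∂μ := by
  rw [← integral_add_measure hφτ hφμ]
  exact integral_mono_measure hρ (ae_of_all _ hφ) (hφτ.add_measure hφμ)

lemma abs_integral_sub_integral_le {ρ τ μ : Measure α} (hρ : ρ ≤ τ + μ) (hτ : τ ≤ ρ + μ)
    {φ : α → ℝ} (hφρ : Integrable φ ρ) (hφτ : Integrable φ τ) (hφμ : Integrable φ μ) :
    |∫ x, φ x ∂ρ - ∫ x, φ x ∂τ| ≤ ∫ x, |φ x| ∂μ := by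
  have integral_eq_sub : ∀ {σ : Measure α}, Integrable φ σ →
      ∫ x, φ x ∂σ = ∫ x, max (φ x) 0 ∂σ - ∫ x, max (-φ x) 0 ∂σ := fun h => by
    simp_rw [← integral_sub h.pos_part h.neg_part, max_zero_sub_eq_self]
  have integral_abs_eq_add : ∫ x, |φ x| ∂μ = ∫ x, max (φ x) 0 ∂μ + ∫ x, max (-φ x) 0 ∂μ := by
    simp_rw [← integral_add hφμ.pos_part hφμ.neg_part, max_zero_add_max_neg_zero_eq_abs_self]
  have hpos : 0 ≤ fun x => max (φ x) 0 := fun x => le_max_right _ _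
  have hneg : 0 ≤ fun x => max (-φ x) 0 := fun x => le_max_right _ _
  have := integral_le_integral_add_of_le_add hρ hpos hφτ.pos_part hφμ.pos_part
  have := integral_le_integral_add_of_le_add hρ hneg hφτ.neg_part hφμ.neg_part
  have := integral_le_integral_add_of_le_add hτ hpos hφρ.pos_part hφμ.pos_part
  have := integral_le_integral_add_of_le_add hτ hneg hφρ.neg_part hφμ.neg_part
  rw [integral_eq_sub hφρ, integral_eq_sub hφτ, integral_abs_eq_add, abs_le]
  constructor <;> linarith

lemma integral_dependenceMeasure {S : Set α} {T : Set β} {k : α × β → ℝ} {f : α → ℝ} {g : β → ℝ}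
    (hmeas : AEMeasurable (fun z => |localDependence k f g z|) ((ν.prod η).restrict (S ×ˢ T)))
    (φ : α × β → ℝ) :
    ∫ z, φ z ∂(dependenceMeasure ν η S T k f g) =
      ∫ z in S ×ˢ T, φ z * |localDependence k f g z| ∂(ν.prod η) := by
  rw [dependenceMeasure, integral_withDensity_eq_integral_toReal_smul₀ hmeas.ennreal_ofReal
    (ae_of_all _ fun _ => ENNReal.ofReal_lt_top)]
  simp only [ENNReal.toReal_ofReal (abs_nonneg _), smul_eq_mul, mul_comm]

lemma integrable_dependenceMeasure_iff {S : Set α} {T : Set β} {k : α × β → ℝ} {f : α → ℝ}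
    {g : β → ℝ}
    (hmeas : AEMeasurable (fun z => |localDependence k f g z|) ((ν.prod η).restrict (S ×ˢ T)))
    {φ : α × β → ℝ} :
    Integrable φ (dependenceMeasure ν η S T k f g) ↔
      IntegrableOn (fun z => φ z * |localDependence k f g z|) (S ×ˢ T) (ν.prod η) := by
  rw [dependenceMeasure, integrable_withDensity_iff_integrable_smul₀' hmeas.ennreal_ofReal
    (ae_of_all _ fun _ => ENNReal.ofReal_lt_top), IntegrableOn]
  simp only [ENNReal.toReal_ofReal (abs_nonneg _), smul_eq_mul, mul_comm]

lemma abs_cov_comp_le_integral_localDependence [SFinite ν] [SFinite η] {Ω : Type*}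
    [MeasurableSpace Ω] {P : Measure Ω} [IsFiniteMeasure P] {Y : Ω → α} {Z : Ω → β}
    (hY : Measurable Y) (hZ : Measurable Z) {S : Set α} {T : Set β} {k : α × β → ℝ} {f : α → ℝ}
    {g : β → ℝ} (hf : ∀ x ∉ S, f x = 0) (hg : ∀ y ∉ T, g y = 0)
    (hYZ_law : P.map (fun ω => (Y ω, Z ω)) =
      (ν.prod η).withDensity fun z => ENNReal.ofReal (k z))
    (hY_law : P.map Y = ν.withDensity fun x => ENNReal.ofReal (f x))
    (hZ_law : P.map Z = η.withDensity fun y => ENNReal.ofReal (g y))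
    (hmeas : AEMeasurable (fun z => |localDependence k f g z|) ((ν.prod η).restrict (S ×ˢ T)))
    {φ : α → ℝ} {ψ : β → ℝ} (hφ : Measurable φ) (hψ : Measurable ψ)
    (hφY : Integrable (fun ω => φ (Y ω)) P) (hψZ : Integrable (fun ω => ψ (Z ω)) P)
    (hφψ : Integrable (fun ω => φ (Y ω) * ψ (Z ω)) P)
    (hφψh : IntegrableOn (fun z => φ z.1 * ψ z.2 * |localDependence k f g z|) (S ×ˢ T)
      (ν.prod η)) :
    |cov P (fun ω => φ (Y ω)) (fun ω => ψ (Z ω))| ≤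
      ∫ z in S ×ˢ T, |φ z.1 * ψ z.2| * |localDependence k f g z| ∂(ν.prod η) := by
  set ρ := P.map fun ω => (Y ω, Z ω)
  have hYZ : Measurable fun ω => (Y ω, Z ω) := hY.prodMk hZ
  have hfst : ρ.fst = P.map Y := Measure.fst_map_prodMk hZ
  have hsnd : ρ.snd = P.map Z := Measure.snd_map_prodMk hY
  have hcov : cov P (fun ω => φ (Y ω)) (fun ω => ψ (Z ω)) =
      ∫ z, φ z.1 * ψ z.2 ∂ρ - ∫ z, φ z.1 * ψ z.2 ∂(ρ.fst.prod ρ.snd) := by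
    rw [cov, integral_prod_mul, hfst, hsnd, integral_map hY.aemeasurable (by fun_prop),
      integral_map hZ.aemeasurable (by fun_prop), integral_map hYZ.aemeasurable (by fun_prop)]
  obtain ⟨hle, hge⟩ := joint_le_prod_add_and_prod_le_joint_add (ν := ν) (η := η) (ρ := ρ) hf hg
    hYZ_law (hfst.trans hY_law) (hsnd.trans hZ_law) hmeas
  rw [hcov, ← integral_dependenceMeasure hmeas]
  refine abs_integral_sub_integral_le hle hge ?_ ?_ ((integrable_dependenceMeasure_iff hmeas).mpr
    hφψh)
  · exact (integrable_map_measure (by fun_prop) hYZ.aemeasurable).mpr hφψ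
  · rw [hfst, hsnd]
    exact ((integrable_map_measure (by fun_prop) hY.aemeasurable).mpr hφY).mul_prod
      ((integrable_map_measure (by fun_prop) hZ.aemeasurable).mpr hψZ)

lemma aemeasurable_abs_of_abs_rpow {p : ℝ} (hp : p ≠ 0) {h : α → ℝ}
    (hh : AEMeasurable (fun x => |h x| ^ p) ν) : AEMeasurable (fun x => |h x|) ν := by
  simpa only [← rpow_mul (abs_nonneg _), mul_inv_cancel₀ hp, rpow_one] using hh.pow_const p⁻¹

lemma memLp_abs_of_integrable_rpow {p : ℝ} (hp : 0 < p) {h : α → ℝ}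
    (hh : Integrable (fun x => |h x| ^ p) ν) : MemLp (fun x => |h x|) (ENNReal.ofReal p) ν := by
  refine (integrable_norm_rpow_iff ?_ (by simpa) ENNReal.ofReal_ne_top).mp ?_
  · exact (aemeasurable_abs_of_abs_rpow hp.ne' hh.aemeasurable).aestronglyMeasurable
  · simpa only [ENNReal.toReal_ofReal hp.le, norm_abs_eq_norm, norm_eq_abs] using hh

lemma memLp_prod_mul {p : ENNReal} (hp_zero : p ≠ 0) (hp_top : p ≠ ⊤) {φ : α → ℝ}
    {ψ : β → ℝ} (hφ : MemLp φ p ν) (hψ : MemLp ψ p η) :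
    MemLp (fun z => φ z.1 * ψ z.2) p (ν.prod η) := by
  have hmeas : AEStronglyMeasurable (fun z => φ z.1 * ψ z.2) (ν.prod η) :=
    hφ.1.comp_fst.mul hψ.1.comp_snd
  rw [← integrable_norm_rpow_iff hmeas hp_zero hp_top]
  simpa only [norm_mul, mul_rpow (norm_nonneg _) (norm_nonneg _)] using
    ((integrable_norm_rpow_iff hφ.1 hp_zero hp_top).mpr hφ).mul_prod
      ((integrable_norm_rpow_iff hψ.1 hp_zero hp_top).mpr hψ)

lemma integral_abs_mul_mul_le_Lq_mul_Lq_mul_Lp [SFinite ν] [SFinite η] {p q : ℝ}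
    (hpq : p.HolderConjugate q) {φ : α → ℝ} {ψ : β → ℝ} {h : α × β → ℝ}
    (hφ : MemLp φ (ENNReal.ofReal q) ν) (hψ : MemLp ψ (ENNReal.ofReal q) η)
    (hh : MemLp (fun z => |h z|) (ENNReal.ofReal p) (ν.prod η)) :
    ∫ z, |φ z.1 * ψ z.2| * |h z| ∂(ν.prod η) ≤
      (∫ x, |φ x| ^ q ∂ν) ^ (1 / q) * (∫ y, |ψ y| ^ q ∂η) ^ (1 / q) *
        (∫ z, |h z| ^ p ∂(ν.prod η)) ^ (1 / p) := by
  have hφψ := memLp_prod_mul (by simpa using hpq.symm.pos) ENNReal.ofReal_ne_top hφ hψ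
  refine (integral_mul_le_Lp_mul_Lq_of_nonneg hpq.symm (ae_of_all _ fun _ => abs_nonneg _)
    (ae_of_all _ fun _ => abs_nonneg _) hφψ.abs hh).trans_eq ?_
  simp_rw [abs_mul, mul_rpow (abs_nonneg _) (abs_nonneg _)]
  rw [integral_prod_mul (fun x => |φ x| ^ q) fun y => |ψ y| ^ q,
    mul_rpow (integral_nonneg fun _ => by positivity) (integral_nonneg fun _ => by positivity)]

lemma abs_cov_comp_le_Lq_mul_Lq_mul_Lp_localDependence [SFinite ν] [SFinite η] {Ω : Type*}
    [MeasurableSpace Ω] {P : Measure Ω} [IsFiniteMeasure P] {Y : Ω → α} {Z : Ω → β}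
    (hY : Measurable Y) (hZ : Measurable Z) {S : Set α} {T : Set β} {k : α × β → ℝ} {f : α → ℝ}
    {g : β → ℝ} (hf : ∀ x ∉ S, f x = 0) (hg : ∀ y ∉ T, g y = 0)
    (hYZ_law : P.map (fun ω => (Y ω, Z ω)) =
      (ν.prod η).withDensity fun z => ENNReal.ofReal (k z))
    (hY_law : P.map Y = ν.withDensity fun x => ENNReal.ofReal (f x))
    (hZ_law : P.map Z = η.withDensity fun y => ENNReal.ofReal (g y))
    {p q : ℝ} (hpq : p.HolderConjugate q)
    (hh : IntegrableOn (fun z => |localDependence k f g z| ^ p) (S ×ˢ T) (ν.prod η))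
    {φ : α → ℝ} {ψ : β → ℝ} (hφ : Measurable φ) (hψ : Measurable ψ)
    (hφY : Integrable (fun ω => φ (Y ω)) P) (hψZ : Integrable (fun ω => ψ (Z ω)) P)
    (hφψ : Integrable (fun ω => φ (Y ω) * ψ (Z ω)) P)
    (hφq : MemLp φ (ENNReal.ofReal q) (ν.restrict S))
    (hψq : MemLp ψ (ENNReal.ofReal q) (η.restrict T)) :
    |cov P (fun ω => φ (Y ω)) (fun ω => ψ (Z ω))| ≤
      (∫ x in S, |φ x| ^ q ∂ν) ^ (1 / q) * (∫ y in T, |ψ y| ^ q ∂η) ^ (1 / q) *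
        (∫ z in S ×ˢ T, |localDependence k f g z| ^ p ∂(ν.prod η)) ^ (1 / p) := by
  have hhp := memLp_abs_of_integrable_rpow hpq.pos hh
  have hφψq : MemLp (fun z : α × β => φ z.1 * ψ z.2) (ENNReal.ofReal q)
      ((ν.prod η).restrict (S ×ˢ T)) := by
    rw [← Measure.prod_restrict]
    exact memLp_prod_mul (by simpa using hpq.symm.pos) ENNReal.ofReal_ne_top hφq hψq
  have := hpq.symm.ennrealOfReal
  refine (abs_cov_comp_le_integral_localDependence hY hZ hf hg hYZ_law hY_law hZ_law
    hhp.1.aemeasurable hφ hψ hφY hψZ hφψ (hφψq.integrable_mul hhp)).trans ?_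
  rw [← Measure.prod_restrict] at hhp ⊢
  exact integral_abs_mul_mul_le_Lq_mul_Lq_mul_Lp hpq hφq hψq hhp

end LocalDependence

section Stirling

/-- The error in Stirling's approximation `log Γ(z + 1) ≈ (z + 1/2) log z - z`. -/
noncomputable def stirlingRemainder (z : ℝ) : ℝ :=
  log (Gamma (z + 1)) - ((z + 1 / 2) * log z - z)

lemma one_le_add_half_mul_log_one_add_inv {z : ℝ} (hz : 0 < z) :
    1 ≤ (z + 1 / 2) * log (1 + z⁻¹) := by
  calc 1 = (z + 1 / 2) * (2 * z⁻¹ / (z⁻¹ + 2)) := by field_simp; ring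
    _ ≤ (z + 1 / 2) * log (1 + z⁻¹) := by
      gcongr
      exact le_log_one_add_of_nonneg (by positivity)

lemma log_le_sub_inv_div_two {t : ℝ} (ht : 1 ≤ t) : log t ≤ (t - t⁻¹) / 2 := by
  rw [← sinh_log (by positivity)]
  exact self_le_sinh_iff.mpr (log_nonneg ht)

lemma add_half_mul_log_one_add_inv_le {z : ℝ} (hz : 0 < z) :
    (z + 1 / 2) * log (1 + z⁻¹) ≤ 1 + (z⁻¹ - (z + 1)⁻¹) / 4 := by
  calc (z + 1 / 2) * log (1 + z⁻¹)
      ≤ (z + 1 / 2) * ((1 + z⁻¹ - (1 + z⁻¹)⁻¹) / 2) := by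
        gcongr
        exact log_le_sub_inv_div_two (by simpa using hz.le)
    _ = 1 + (z⁻¹ - (z + 1)⁻¹) / 4 := by field_simp; ring

lemma stirlingRemainder_add_one {z : ℝ} (hz : 0 < z) :
    stirlingRemainder (z + 1) = stirlingRemainder z + 1 - (z + 1 / 2) * log (1 + z⁻¹) := by
  have hlog : log (1 + z⁻¹) = log (z + 1) - log z := by
    rw [← log_div (by positivity) hz.ne']
    congr 1
    field_simp
  have hGamma : log (Gamma (z + 1 + 1)) = log (z + 1) + log (Gamma (z + 1)) := by
    have hz' : 0 < z + 1 := by positivity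
    rw [Gamma_add_one hz'.ne', log_mul hz'.ne' (Gamma_pos_of_pos hz').ne']
  rw [stirlingRemainder, stirlingRemainder, hlog, hGamma]
  ring

lemma stirlingRemainder_add_natCast_le {z : ℝ} (hz : 0 < z) (n : ℕ) :
    stirlingRemainder (z + n) ≤ stirlingRemainder z := by
  induction n with
  | zero => simp
  | succ n ih =>
    have := one_le_add_half_mul_log_one_add_inv (z := z + n) (by positivity)
    rw [Nat.cast_succ, ← add_assoc, stirlingRemainder_add_one (by positivity)]
    linarith

lemma le_stirlingRemainder_add_natCast {z : ℝ} (hz : 0 < z) (n : ℕ) :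
    stirlingRemainder z - z⁻¹ / 4 ≤ stirlingRemainder (z + n) - (z + n)⁻¹ / 4 := by
  induction n with
  | zero => simp
  | succ n ih =>
    have := add_half_mul_log_one_add_inv_le (z := z + n) (by positivity)
    rw [Nat.cast_succ, ← add_assoc, stirlingRemainder_add_one (by positivity)]
    linarith

lemma continuousOn_stirlingRemainder : ContinuousOn stirlingRemainder (Set.Ioi 0) := by
  intro z (hz : 0 < z)
  have hGamma : ContinuousAt Gamma (z + 1) :=
    (differentiableOn_Gamma_Ioi.differentiableAt (Ioi_mem_nhds (by positivity))).continuousAt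
  have hz' : Gamma (z + 1) ≠ 0 := (Gamma_pos_of_pos (by positivity)).ne'
  have : ContinuousAt (fun z => Gamma (z + 1)) z :=
    hGamma.comp (f := fun z : ℝ => z + 1) (by fun_prop)
  have := hz.ne'
  unfold stirlingRemainder
  fun_prop (disch := assumption)

lemma exists_abs_stirlingRemainder_le : ∃ C, ∀ z, 1 ≤ z → |stirlingRemainder z| ≤ C := by
  obtain ⟨C, hC⟩ := isCompact_Icc.exists_bound_of_continuousOn
    (continuousOn_stirlingRemainder.mono fun z (hz : z ∈ Set.Icc (1 : ℝ) 2) => by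
      simpa using zero_lt_one.trans_le hz.1)
  refine ⟨C + 1 / 4, fun z hz => ?_⟩
  obtain ⟨y, n, hy, rfl⟩ : ∃ (y : ℝ) (n : ℕ), y ∈ Set.Icc (1 : ℝ) 2 ∧ z = y + n := by
    refine ⟨z - ⌊z - 1⌋₊, ⌊z - 1⌋₊, ⟨?_, ?_⟩, by ring⟩
    · linarith [Nat.floor_le (sub_nonneg.mpr hz)]
    · linarith [Nat.lt_floor_add_one (z - 1)]
  have hy_pos : 0 < y := zero_lt_one.trans_le hy.1
  have hupper := stirlingRemainder_add_natCast_le hy_pos n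
  have hlower := le_stirlingRemainder_add_natCast hy_pos n
  have hinv : 0 ≤ (y + n)⁻¹ := by positivity
  have hinv' : y⁻¹ ≤ 1 := inv_le_one_of_one_le₀ hy.1
  have := abs_le.mp (hC y hy)
  rw [abs_le]
  constructor <;> linarith

lemma Gamma_add_natCast_le {x : ℝ} (hx : 0 < x) (n : ℕ) :
    Gamma (x + n) ≤ (x + n) ^ n * Gamma x := by
  induction n with
  | zero => simp
  | succ n ih =>
    have hxn : 0 < x + n := by positivity
    have := Gamma_pos_of_pos hx
    calc Gamma (x + (n + 1 : ℕ)) = (x + n) * Gamma (x + n) := by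
          rw [Nat.cast_succ, ← add_assoc, Gamma_add_one hxn.ne']
      _ ≤ (x + n) * ((x + n) ^ n * Gamma x) := by gcongr
      _ = (x + n) ^ (n + 1) * Gamma x := by ring
      _ ≤ (x + (n + 1 : ℕ)) ^ (n + 1) * Gamma x := by
        gcongr
        exact n.le_succ

lemma Gamma_add_one_add_natCast_le {x : ℝ} (hx : 1 ≤ x) (n : ℕ) :
    Gamma (x + 1 + n) ≤ ((n + 2) * x) ^ n * Gamma (x + 1) := by
  have : 0 < x := zero_lt_one.trans_le hx
  have := Gamma_pos_of_pos (show 0 < x + 1 by positivity)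
  refine (Gamma_add_natCast_le (by positivity) n).trans ?_
  gcongr
  nlinarith [Nat.cast_nonneg (α := ℝ) n]

end Stirling

section DirichletConcentration

variable {ι : Type*} [Fintype ι]

lemma log_multinomial_eq {w : ι → ℝ} (hw : ∀ i, 0 < w i) (hw_sum : ∑ i, w i = 1) {N : ℝ}
    (hN : 0 < N) :
    log (Gamma (N + 1)) - ∑ i, log (Gamma (w i * N + 1)) + ∑ i, w i * N * log (w i) =
      stirlingRemainder N - ∑ i, stirlingRemainder (w i * N) - (∑ i, log (w i)) / 2
        - (Fintype.card ι - 1) / 2 * log N := by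
  have hterm : ∀ i, log (Gamma (w i * N + 1)) - w i * N * log (w i) =
      stirlingRemainder (w i * N) + w i * (N * log N - N) + log (w i) / 2 + log N / 2 := fun i => by
    rw [stirlingRemainder, log_mul (hw i).ne' hN.ne']
    ring
  have hsum := Finset.sum_congr rfl fun i (_ : i ∈ Finset.univ) => hterm i
  simp only [Finset.sum_add_distrib, Finset.sum_sub_distrib, ← Finset.sum_mul, ← Finset.sum_div,
    hw_sum, Finset.sum_const, Finset.card_univ, nsmul_eq_mul] at hsum
  have hN_eq : log (Gamma (N + 1)) = stirlingRemainder N + ((N + 1 / 2) * log N - N) := by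
    rw [stirlingRemainder]
    ring
  linarith

lemma multinomial_mul_prod_rpow_eq {w : ι → ℝ} (hw : ∀ i, 0 < w i) (hw_sum : ∑ i, w i = 1)
    {N : ℝ} (hN : 0 < N) :
    Gamma (N + 1) / (∏ i, Gamma (w i * N + 1)) * (∏ i, w i ^ w i) ^ N =
      exp (stirlingRemainder N - ∑ i, stirlingRemainder (w i * N) - (∑ i, log (w i)) / 2) *
        N ^ (-((Fintype.card ι - 1) / 2 : ℝ)) := by
  have hGamma_pos : ∀ i, 0 < Gamma (w i * N + 1) := fun i =>
    Gamma_pos_of_pos (by have := hw i; positivity)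
  have hprod_Gamma_pos := Finset.prod_pos fun i (_ : i ∈ Finset.univ) => hGamma_pos i
  have hprod_pos : 0 < ∏ i, w i ^ w i := Finset.prod_pos fun i _ => rpow_pos_of_pos (hw i) _
  have := Gamma_pos_of_pos (show 0 < N + 1 by positivity)
  have hlog : log (Gamma (N + 1) / (∏ i, Gamma (w i * N + 1)) * (∏ i, w i ^ w i) ^ N) =
      log (Gamma (N + 1)) - ∑ i, log (Gamma (w i * N + 1)) + ∑ i, w i * N * log (w i) := by
    rw [log_mul (by positivity) (by positivity), log_div (by positivity) (by positivity),
      log_rpow hprod_pos, log_prod fun i _ => (hGamma_pos i).ne',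
      log_prod fun i _ => (rpow_pos_of_pos (hw i) _).ne', Finset.mul_sum]
    simp only [log_rpow (hw _), mul_left_comm N, mul_assoc]
  rw [← exp_log (show 0 < Gamma (N + 1) / (∏ i, Gamma (w i * N + 1)) * (∏ i, w i ^ w i) ^ N by
    positivity), hlog, log_multinomial_eq hw hw_sum hN, rpow_def_of_pos hN, ← exp_add]
  congr 1
  ring

lemma exists_multinomial_mul_prod_rpow_le {w : ι → ℝ} (hw : ∀ i, 0 < w i)
    (hw_sum : ∑ i, w i = 1) :
    ∃ C > 0, ∀ᶠ N : ℝ in atTop,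
      Gamma (N + 1) / (∏ i, Gamma (w i * N + 1)) * (∏ i, w i ^ w i) ^ N ≤
        C * N ^ (-((Fintype.card ι - 1) / 2 : ℝ)) := by
  obtain ⟨C, hC⟩ := exists_abs_stirlingRemainder_le
  have hwN : ∀ᶠ N : ℝ in atTop, ∀ i, 1 ≤ w i * N :=
    eventually_all.mpr fun i => (tendsto_id.const_mul_atTop (hw i)).eventually_ge_atTop 1
  refine ⟨exp (C + ∑ _i : ι, C - (∑ i, log (w i)) / 2), exp_pos _, ?_⟩
  filter_upwards [hwN, eventually_ge_atTop 1] with N hwN hN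
  have hN_pos : 0 < N := zero_lt_one.trans_le hN
  have hremainder : -∑ i, stirlingRemainder (w i * N) ≤ ∑ _i : ι, C := by
    rw [← Finset.sum_neg_distrib]
    exact Finset.sum_le_sum fun i _ => (neg_le_abs _).trans (hC _ (hwN i))
  rw [multinomial_mul_prod_rpow_eq hw hw_sum hN_pos]
  gcongr
  linarith [(le_abs_self _).trans (hC N hN)]

-- Comparing `√x` with `√s` in `log t ≤ t - 1` is what yields the quadratic term.
lemma mul_log_le_mul_log_add {x s : ℝ} (hx : x ∈ Set.Ioc 0 1) (hs : s ∈ Set.Ioc 0 1) :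
    s * log x ≤ s * log s + (x - s - (x - s) ^ 2 / 4) := by
  obtain ⟨u, hu, rfl⟩ : ∃ u, 0 < u ∧ u ^ 2 = x := ⟨√x, sqrt_pos.mpr hx.1, sq_sqrt hx.1.le⟩
  obtain ⟨v, hv, rfl⟩ : ∃ v, 0 < v ∧ v ^ 2 = s := ⟨√s, sqrt_pos.mpr hs.1, sq_sqrt hs.1.le⟩
  have hlog : v ^ 2 * (log u - log v) ≤ v * u - v ^ 2 := by
    calc v ^ 2 * (log u - log v) ≤ v ^ 2 * (u / v - 1) := by
          rw [← log_div hu.ne' hv.ne']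
          gcongr
          exact log_le_sub_one_of_pos (by positivity)
      _ = v * u - v ^ 2 := by field_simp
  have hsq : (u ^ 2 - v ^ 2) ^ 2 / 4 ≤ (u - v) ^ 2 := by
    have huv : (u + v) ^ 2 ≤ 4 := by nlinarith [hx.2, hs.2]
    nlinarith [mul_le_mul_of_nonneg_left huv (sq_nonneg (u - v))]
  simp only [log_pow, Nat.cast_ofNat]
  linarith

lemma rpow_le_rpow_self_mul_exp {x s : ℝ} (hx : x ∈ Set.Icc 0 1) (hs : s ∈ Set.Ioc 0 1) :
    x ^ s ≤ s ^ s * exp (x - s - (x - s) ^ 2 / 4) := by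
  have := hs.1
  obtain rfl | hx_pos := hx.1.eq_or_lt
  · rw [zero_rpow hs.1.ne']
    positivity
  · rw [rpow_def_of_pos hx_pos, rpow_def_of_pos hs.1, ← exp_add, exp_le_exp, mul_comm (log x),
      mul_comm (log s)]
    exact mul_log_le_mul_log_add ⟨hx_pos, hx.2⟩ hs

lemma prod_rpow_le_prod_rpow_self_mul_exp {x w : ι → ℝ} (hx : x ∈ stdSimplex ℝ ι)
    (hw : w ∈ stdSimplex ℝ ι) (hw_pos : ∀ i, 0 < w i) :
    ∏ i, x i ^ w i ≤ (∏ i, w i ^ w i) * exp (-(∑ i, (x i - w i) ^ 2) / 4) := by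
  calc ∏ i, x i ^ w i ≤ ∏ i, w i ^ w i * exp (x i - w i - (x i - w i) ^ 2 / 4) :=
        Finset.prod_le_prod (fun i _ => rpow_nonneg (hx.1 i) _) fun i _ =>
          rpow_le_rpow_self_mul_exp (mem_Icc_of_mem_stdSimplex hx i)
            ⟨hw_pos i, (mem_Icc_of_mem_stdSimplex hw i).2⟩
    _ = _ := by
      rw [Finset.prod_mul_distrib, ← exp_sum, Finset.sum_sub_distrib, Finset.sum_sub_distrib,
        hx.2, hw.2, ← Finset.sum_div]
      ring_nf

end DirichletConcentration

section DirichletKernel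

variable {d : ℕ}

/-- The barycentric coordinates of a point of the simplex `S_d`, with the coordinate
`1 - ∑ i, x i` in front. They identify `S_d` with the standard simplex. -/
def barycentric (x : Fin d → ℝ) : Fin (d + 1) → ℝ :=
  Fin.cons (1 - ∑ i, x i) x

lemma sum_barycentric (x : Fin d → ℝ) : ∑ i, barycentric x i = 1 := by
  simp [barycentric, Fin.sum_univ_succ]

lemma barycentric_mem_stdSimplex {x : Fin d → ℝ} (hx : x ∈ Sd d) :
    barycentric x ∈ stdSimplex ℝ (Fin (d + 1)) := by
  refine ⟨fun i => Fin.cases ?_ (fun i => (hx.1 i).1) i, sum_barycentric x⟩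
  exact sub_nonneg.mpr ((Finset.sum_le_sum fun i _ => le_abs_self (x i)).trans hx.2)

lemma barycentric_pos {s : Fin d → ℝ} (hs : s ∈ SdInt d) (i : Fin (d + 1)) :
    0 < barycentric s i := by
  refine Fin.cases ?_ (fun i => (hs.1 i).1) i
  exact sub_pos.mpr ((Finset.sum_le_sum fun i _ => le_abs_self (s i)).trans_lt hs.2)

lemma SdInt_subset_Sd : SdInt d ⊆ Sd d :=
  fun _ hs => ⟨fun i => Set.Ioo_subset_Icc_self (hs.1 i), hs.2.le⟩

lemma Sd_eq_Icc_inter : Sd d = Set.Icc 0 1 ∩ {x | ∑ i, |x i| ≤ 1} := by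
  ext x
  simp [Sd, Pi.le_def, forall_and]

lemma isCompact_Sd : IsCompact (Sd d) := by
  rw [Sd_eq_Icc_inter]
  exact isCompact_Icc.inter_right (isClosed_le (by fun_prop) continuous_const)

lemma measurable_kappa (s : Fin d → ℝ) (b : ℝ) : Measurable (kappa d s b) := by
  unfold kappa dirK
  fun_prop

lemma kappa_eq {s x : Fin d → ℝ} {b : ℝ} (hb : b ≠ 0) (hx : x ∈ Sd d) :
    kappa d s b x = Gamma (b⁻¹ + 1 + d) / (∏ i, Gamma (barycentric s i * b⁻¹ + 1)) *
      (∏ i, barycentric x i ^ barycentric s i) ^ b⁻¹ := by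
  have hx_nonneg := (barycentric_mem_stdSimplex hx).1
  have harg : ∑ i, (s i * b⁻¹ + 1) + ((1 - ∑ i, s i) * b⁻¹ + 1) = b⁻¹ + 1 + d := by
    rw [Finset.sum_add_distrib, ← Finset.sum_mul]
    simp only [Finset.sum_const, Finset.card_univ, Fintype.card_fin, nsmul_eq_mul]
    field_simp
    ring
  have hpow : (∏ i, barycentric x i ^ barycentric s i) ^ b⁻¹ =
      ∏ i, barycentric x i ^ (barycentric s i * b⁻¹) := by
    rw [← finsetProd_rpow _ _ fun i _ => rpow_nonneg (hx_nonneg i) _]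
    simp only [rpow_mul (hx_nonneg _)]
  rw [hpow, kappa, dirK]
  simp only [div_eq_mul_inv, Fin.prod_univ_succ, barycentric, Fin.cons_zero,
    Fin.cons_succ, harg, add_sub_cancel_right, mul_assoc]

lemma dirichletConst_pos {s : Fin d → ℝ} {b : ℝ} (hb : 0 < b) (hs : s ∈ SdInt d) :
    0 < Gamma (b⁻¹ + 1 + d) / ∏ i, Gamma (barycentric s i * b⁻¹ + 1) :=
  div_pos (Gamma_pos_of_pos (by positivity)) (Finset.prod_pos fun i _ =>
    Gamma_pos_of_pos (by have := barycentric_pos hs i; positivity))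

lemma kappa_nonneg {s x : Fin d → ℝ} {b : ℝ} (hb : 0 < b) (hs : s ∈ SdInt d) (hx : x ∈ Sd d) :
    0 ≤ kappa d s b x := by
  rw [kappa_eq hb.ne' hx]
  exact mul_nonneg (dirichletConst_pos hb hs).le (rpow_nonneg (Finset.prod_nonneg fun i _ =>
    rpow_nonneg ((barycentric_mem_stdSimplex hx).1 i) _) _)

lemma kappa_le_mul_exp {s x : Fin d → ℝ} {b : ℝ} (hb : 0 < b) (hs : s ∈ SdInt d) (hx : x ∈ Sd d) :
    kappa d s b x ≤ Gamma (b⁻¹ + 1 + d) / (∏ i, Gamma (barycentric s i * b⁻¹ + 1)) *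
      (∏ i, barycentric s i ^ barycentric s i) ^ b⁻¹ *
        exp (-(4 * b)⁻¹ * ∑ i, (x i - s i) ^ 2) := by
  have hs_pos := barycentric_pos hs
  have hx' := barycentric_mem_stdSimplex hx
  have hs_prod := Finset.prod_nonneg fun i (_ : i ∈ Finset.univ) =>
    rpow_nonneg (hs_pos i).le (barycentric s i)
  have hsq : ∑ i, (x i - s i) ^ 2 ≤ ∑ i, (barycentric x i - barycentric s i) ^ 2 := by
    rw [Fin.sum_univ_succ]
    exact le_add_of_nonneg_left (sq_nonneg _)
  have hconst := dirichletConst_pos hb hs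
  calc kappa d s b x = _ := kappa_eq hb.ne' hx
    _ ≤ Gamma (b⁻¹ + 1 + d) / (∏ i, Gamma (barycentric s i * b⁻¹ + 1)) *
        ((∏ i, barycentric s i ^ barycentric s i) *
          exp (-(∑ i, (barycentric x i - barycentric s i) ^ 2) / 4)) ^ b⁻¹ := by
      gcongr
      · exact Finset.prod_nonneg fun i _ => rpow_nonneg (hx'.1 i) _
      · exact prod_rpow_le_prod_rpow_self_mul_exp hx'
          (barycentric_mem_stdSimplex (SdInt_subset_Sd hs)) hs_pos
    _ ≤ Gamma (b⁻¹ + 1 + d) / (∏ i, Gamma (barycentric s i * b⁻¹ + 1)) *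
        ((∏ i, barycentric s i ^ barycentric s i) * exp (-(∑ i, (x i - s i) ^ 2) / 4)) ^ b⁻¹ := by
      gcongr
    _ = _ := by
      rw [mul_rpow hs_prod (exp_pos _).le, ← exp_mul, mul_assoc]
      congr 3
      ring

lemma exists_kappa_le_mul_exp {s : Fin d → ℝ} (hs : s ∈ SdInt d) :
    ∃ C > 0, ∀ᶠ b : ℝ in 𝓝[>] 0, ∀ x ∈ Sd d,
      kappa d s b x ≤ C * b ^ (-(d / 2) : ℝ) * exp (-(4 * b)⁻¹ * ∑ i, (x i - s i) ^ 2) := by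
  obtain ⟨C, hC_pos, hC⟩ :=
    exists_multinomial_mul_prod_rpow_le (barycentric_pos hs) (sum_barycentric s)
  refine ⟨(d + 2) ^ d * C, by positivity, ?_⟩
  filter_upwards [tendsto_inv_nhdsGT_zero.eventually hC, Ioo_mem_nhdsGT zero_lt_one]
    with b hC ⟨hb, hb_lt_one⟩ x hx
  have hs_prod : 0 < ∏ i, barycentric s i ^ barycentric s i :=
    Finset.prod_pos fun i _ => rpow_pos_of_pos (barycentric_pos hs i) _
  have hGamma_prod : 0 < ∏ i, Gamma (barycentric s i * b⁻¹ + 1) := Finset.prod_pos fun i _ =>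
    Gamma_pos_of_pos (by have := barycentric_pos hs i; positivity)
  refine (kappa_le_mul_exp hb hs hx).trans (mul_le_mul_of_nonneg_right ?_ (exp_pos _).le)
  calc Gamma (b⁻¹ + 1 + d) / (∏ i, Gamma (barycentric s i * b⁻¹ + 1)) *
        (∏ i, barycentric s i ^ barycentric s i) ^ b⁻¹
      ≤ ((d + 2) * b⁻¹) ^ d * Gamma (b⁻¹ + 1) / (∏ i, Gamma (barycentric s i * b⁻¹ + 1)) *
        (∏ i, barycentric s i ^ barycentric s i) ^ b⁻¹ := by
        gcongr
        exact Gamma_add_one_add_natCast_le ((one_le_inv₀ hb).mpr hb_lt_one.le) d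
    _ = ((d + 2) * b⁻¹) ^ d * (Gamma (b⁻¹ + 1) / (∏ i, Gamma (barycentric s i * b⁻¹ + 1)) *
        (∏ i, barycentric s i ^ barycentric s i) ^ b⁻¹) := by ring
    _ ≤ ((d + 2) * b⁻¹) ^ d * (C * b⁻¹ ^ (-((Fintype.card (Fin (d + 1)) - 1) / 2 : ℝ))) := by
        gcongr
    _ = (d + 2) ^ d * C * (b ^ (-d : ℝ) * b ^ (d / 2 : ℝ)) := by
        rw [inv_rpow hb.le, ← rpow_neg hb.le, rpow_neg_natCast, zpow_neg, zpow_natCast, mul_pow,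
          inv_pow, Fintype.card_fin, Nat.cast_succ]
        ring_nf
    _ = (d + 2) ^ d * C * b ^ (-(d / 2) : ℝ) := by
        rw [← rpow_add hb]
        ring_nf

lemma integral_exp_neg_mul_sum_sub_sq {ι : Type*} [Fintype ι] (c : ℝ) (s : ι → ℝ) :
    ∫ x : ι → ℝ, exp (-c * ∑ i, (x i - s i) ^ 2) = √(π / c) ^ Fintype.card ι := by
  simp_rw [Finset.mul_sum, exp_sum]
  rw [integral_fintype_prod_volume_eq_prod fun i t => exp (-c * (t - s i) ^ 2)]
  simp_rw [integral_sub_right_eq_self fun t : ℝ => exp (-c * t ^ 2), integral_gaussian,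
    Finset.prod_const, Finset.card_univ]

lemma integrable_exp_neg_mul_sum_sub_sq {ι : Type*} [Fintype ι] {c : ℝ} (hc : 0 < c) (s : ι → ℝ) :
    Integrable fun x : ι → ℝ => exp (-c * ∑ i, (x i - s i) ^ 2) := by
  simp_rw [Finset.mul_sum, exp_sum]
  exact Integrable.fintype_prod (f := fun i t => exp (-c * (t - s i) ^ 2)) fun i =>
    (integrable_exp_neg_mul_sq hc).comp_sub_right (s i)

lemma setIntegral_abs_rpow_le_of_abs_le_mul_exp {ι : Type*} [Fintype ι] {S : Set (ι → ℝ)}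
    (hS : MeasurableSet S) {φ : (ι → ℝ) → ℝ} {s : ι → ℝ} {K c q : ℝ} (hK : 0 ≤ K) (hc : 0 < c)
    (hq : 0 < q) (hφ : ∀ x ∈ S, |φ x| ≤ K * exp (-c * ∑ i, (x i - s i) ^ 2)) :
    ∫ x in S, |φ x| ^ q ≤ K ^ q * √(π / (q * c)) ^ Fintype.card ι := by
  have hbound : ∀ x ∈ S, |φ x| ^ q ≤ K ^ q * exp (-(q * c) * ∑ i, (x i - s i) ^ 2) := fun x hx => by
    calc |φ x| ^ q ≤ (K * exp (-c * ∑ i, (x i - s i) ^ 2)) ^ q := by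
          gcongr
          exact hφ x hx
      _ = K ^ q * exp (-(q * c) * ∑ i, (x i - s i) ^ 2) := by
        rw [mul_rpow hK (exp_pos _).le, ← exp_mul]
        ring_nf
  have hint := (integrable_exp_neg_mul_sum_sub_sq (mul_pos hq hc) s).const_mul (K ^ q)
  calc ∫ x in S, |φ x| ^ q
      ≤ ∫ x in S, K ^ q * exp (-(q * c) * ∑ i, (x i - s i) ^ 2) :=
        integral_mono_of_nonneg (.of_forall fun x => rpow_nonneg (abs_nonneg _) _)
          hint.integrableOn (ae_restrict_of_forall_mem hS hbound)
    _ ≤ ∫ x : ι → ℝ, K ^ q * exp (-(q * c) * ∑ i, (x i - s i) ^ 2) :=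
        setIntegral_le_integral hint (ae_of_all _ fun x => by positivity)
    _ = K ^ q * √(π / (q * c)) ^ Fintype.card ι := by
        rw [integral_const_mul, integral_exp_neg_mul_sum_sub_sq]

lemma exists_integral_abs_kappa_rpow_le {s : Fin d → ℝ} (hs : s ∈ SdInt d) {q : ℝ} (hq : 0 < q) :
    ∃ C ≥ 0, ∀ᶠ b : ℝ in 𝓝[>] 0,
      ∫ x in Sd d, |kappa d s b x| ^ q ≤ C * b ^ (-(d / 2 * (q - 1)) : ℝ) := by
  obtain ⟨C, hC_pos, hC⟩ := exists_kappa_le_mul_exp hs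
  refine ⟨C ^ q * √(4 * π / q) ^ d, by positivity, ?_⟩
  filter_upwards [hC, self_mem_nhdsWithin] with b hC (hb : 0 < b)
  have hsqrt : √(π / (q * (4 * b)⁻¹)) ^ d = √(4 * π / q) ^ d * b ^ (d / 2 : ℝ) := by
    rw [show π / (q * (4 * b)⁻¹) = 4 * π / q * b by field_simp, sqrt_mul (by positivity), mul_pow,
      sqrt_eq_rpow b, ← rpow_mul_natCast hb.le]
    ring_nf
  have hrpow : (b ^ (-(d / 2) : ℝ)) ^ q * b ^ (d / 2 : ℝ) = b ^ (-(d / 2 * (q - 1)) : ℝ) := by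
    rw [← rpow_mul hb.le, ← rpow_add hb]
    ring_nf
  calc ∫ x in Sd d, |kappa d s b x| ^ q
      ≤ (C * b ^ (-(d / 2) : ℝ)) ^ q * √(π / (q * (4 * b)⁻¹)) ^ Fintype.card (Fin d) :=
        setIntegral_abs_rpow_le_of_abs_le_mul_exp isCompact_Sd.measurableSet (by positivity)
          (by positivity) hq fun x hx => (abs_of_nonneg (kappa_nonneg hb hs hx)).trans_le (hC x hx)
    _ = C ^ q * √(4 * π / q) ^ d * b ^ (-(d / 2 * (q - 1)) : ℝ) := by
        rw [Fintype.card_fin, hsqrt, mul_rpow hC_pos.le (by positivity), ← hrpow]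
        ring

lemma exists_Lq_norm_kappa_le {s : Fin d → ℝ} (hs : s ∈ SdInt d) {p q : ℝ}
    (hpq : p.HolderConjugate q) :
    ∃ C ≥ 0, ∀ᶠ b : ℝ in 𝓝[>] 0,
      (∫ x in Sd d, |kappa d s b x| ^ q) ^ (1 / q) ≤ C * b ^ (-(d / (2 * p)) : ℝ) := by
  have hq := hpq.symm.pos
  obtain ⟨C, hC_nonneg, hC⟩ := exists_integral_abs_kappa_rpow_le hs hq
  refine ⟨C ^ (1 / q), by positivity, ?_⟩
  filter_upwards [hC, self_mem_nhdsWithin] with b hC (hb : 0 < b)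
  calc (∫ x in Sd d, |kappa d s b x| ^ q) ^ (1 / q)
      ≤ (C * b ^ (-(d / 2 * (q - 1)) : ℝ)) ^ (1 / q) := by
        gcongr
    _ = C ^ (1 / q) * b ^ (-(d / (2 * p)) : ℝ) := by
        rw [mul_rpow hC_nonneg (by positivity), ← rpow_mul hb.le]
        congr 2
        calc -(d / 2 * (q - 1)) * (1 / q) = -(d / 2 * (1 - q⁻¹)) := by field_simp
          _ = -(d / (2 * p)) := by rw [hpq.symm.one_sub_inv]; ring

lemma exists_abs_kappa_le {s : Fin d → ℝ} {b : ℝ} (hb : 0 < b) (hs : s ∈ SdInt d) :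
    ∃ M, ∀ x ∈ Sd d, |kappa d s b x| ≤ M := by
  refine ⟨_, fun x hx => (abs_of_nonneg (kappa_nonneg hb hs hx)).trans_le
    ((kappa_le_mul_exp hb hs hx).trans (mul_le_of_le_one_right ?_ ?_))⟩
  · exact mul_nonneg (dirichletConst_pos hb hs).le (rpow_nonneg (Finset.prod_nonneg fun i _ =>
      rpow_nonneg (barycentric_pos hs i).le _) _)
  · rw [exp_le_one_iff, neg_mul, neg_nonpos]
    positivity

lemma memLp_kappa {s : Fin d → ℝ} {b : ℝ} (hb : 0 < b) (hs : s ∈ SdInt d) (q : ENNReal) :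
    MemLp (kappa d s b) q (volume.restrict (Sd d)) := by
  obtain ⟨M, hM⟩ := exists_abs_kappa_le hb hs
  have : Fact (volume (Sd d) < ⊤) := ⟨isCompact_Sd.measure_lt_top⟩
  exact .of_bound (measurable_kappa s b).aestronglyMeasurable M
    (ae_restrict_of_forall_mem isCompact_Sd.measurableSet hM)

end DirichletKernel

section NearDiagonalSum

variable {Ω : Type*} [MeasurableSpace Ω] {P : Measure Ω} {d : ℕ}

lemma ae_mem_of_map_eq_withDensity {α : Type*} [MeasurableSpace α] {ν : Measure α} {Y : Ω → α}
    (hY : AEMeasurable Y P) {S : Set α} (hS : MeasurableSet S) {F : α → ENNReal}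
    (hF : ∀ x ∉ S, F x = 0) (hlaw : P.map Y = ν.withDensity F) : ∀ᵐ ω ∂P, Y ω ∈ S := by
  refine ae_of_ae_map hY (p := (· ∈ S)) ?_
  rw [hlaw, ae_iff]
  change ν.withDensity F Sᶜ = 0
  rw [withDensity_apply _ hS.compl, setLIntegral_congr_fun hS.compl (g := 0) hF]
  exact lintegral_zero

lemma memLp_kappa_comp [IsFiniteMeasure P] {s : Fin d → ℝ} {b : ℝ} (hb : 0 < b) (hs : s ∈ SdInt d)
    {Y : Ω → Fin d → ℝ} (hY : Measurable Y) (hY_mem : ∀ᵐ ω ∂P, Y ω ∈ Sd d) (q : ENNReal) :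
    MemLp (fun ω => kappa d s b (Y ω)) q P := by
  obtain ⟨M, hM⟩ := exists_abs_kappa_le hb hs
  exact .of_bound ((measurable_kappa s b).comp hY).aestronglyMeasurable M
    (hY_mem.mono fun ω hω => hM _ hω)

lemma abs_cov_kappa_le [IsFiniteMeasure P] {Y Z : Ω → Fin d → ℝ} (hY : Measurable Y)
    (hZ : Measurable Z) {k : (Fin d → ℝ) × (Fin d → ℝ) → ℝ} {f g : (Fin d → ℝ) → ℝ}
    (hf : ∀ x ∉ Sd d, f x = 0) (hg : ∀ y ∉ Sd d, g y = 0)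
    (hYZ_law : P.map (fun ω => (Y ω, Z ω)) = volume.withDensity fun z => ENNReal.ofReal (k z))
    (hY_law : P.map Y = volume.withDensity fun x => ENNReal.ofReal (f x))
    (hZ_law : P.map Z = volume.withDensity fun y => ENNReal.ofReal (g y))
    {p q : ℝ} (hpq : p.HolderConjugate q)
    (hh : IntegrableOn (fun z => |localDependence k f g z| ^ p) (Sd d ×ˢ Sd d))
    {s : Fin d → ℝ} {b : ℝ} (hb : 0 < b) (hs : s ∈ SdInt d) :
    |cov P (fun ω => kappa d s b (Y ω)) (fun ω => kappa d s b (Z ω))| ≤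
      ((∫ x in Sd d, |kappa d s b x| ^ q) ^ (1 / q)) ^ 2 *
        (∫ z in Sd d ×ˢ Sd d, |localDependence k f g z| ^ p) ^ (1 / p) := by
  have hY_mem := ae_mem_of_map_eq_withDensity hY.aemeasurable isCompact_Sd.measurableSet
    (fun x hx => by rw [hf x hx, ENNReal.ofReal_zero]) hY_law
  have hZ_mem := ae_mem_of_map_eq_withDensity hZ.aemeasurable isCompact_Sd.measurableSet
    (fun y hy => by rw [hg y hy, ENNReal.ofReal_zero]) hZ_law
  have hκ := measurable_kappa s b
  have hκY := memLp_kappa_comp hb hs hY hY_mem 2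
  have hκZ := memLp_kappa_comp hb hs hZ hZ_mem 2
  rw [sq]
  exact abs_cov_comp_le_Lq_mul_Lq_mul_Lp_localDependence hY hZ hf hg hYZ_law hY_law hZ_law hpq hh
    hκ hκ (hκY.integrable one_le_two) (hκZ.integrable one_le_two) (hκY.integrable_mul hκZ)
    (memLp_kappa hb hs _) (memLp_kappa hb hs _)

lemma exists_abs_cov_kappa_le [IsFiniteMeasure P] {X : ℕ → Ω → Fin d → ℝ}
    (hX : ∀ i, Measurable (X i)) {f : (Fin d → ℝ) → ℝ}
    (hlaw : ∀ i, 1 ≤ i → P.map (X i) = volume.withDensity fun x => ENNReal.ofReal (f x))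
    (hf : ∀ x ∉ Sd d, f x = 0) {p : ℝ} (hp : 1 < p) (hA2 : AssumpA2 P X f p)
    {s : Fin d → ℝ} (hs : s ∈ SdInt d) :
    ∃ C, ∀ᶠ b : ℝ in 𝓝[>] 0, ∀ i j, 1 ≤ i → 1 ≤ j → i ≠ j →
      |cov P (fun ω => kappa d s b (X i ω)) (fun ω => kappa d s b (X j ω))| ≤
        C * b ^ (-d / p : ℝ) := by
  obtain ⟨k, hk_law, hk_int, D, hD⟩ := hA2
  have hpq := HolderConjugate.conjExponent hp
  obtain ⟨C, -, hC⟩ := exists_Lq_norm_kappa_le hs hpq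
  refine ⟨C ^ 2 * D, ?_⟩
  filter_upwards [hC, self_mem_nhdsWithin] with b hC (hb : 0 < b) i j hi hj hij
  calc |cov P (fun ω => kappa d s b (X i ω)) (fun ω => kappa d s b (X j ω))|
      ≤ ((∫ x in Sd d, |kappa d s b x| ^ conjExponent p) ^ (1 / conjExponent p)) ^ 2 *
          (∫ z in Sd d ×ˢ Sd d, |localDependence (k i j) f f z| ^ p) ^ (1 / p) :=
        abs_cov_kappa_le (hX i) (hX j) hf hf (hk_law i j hi hj hij) (hlaw i hi) (hlaw j hj) hpq
          (hk_int i j hi hj hij) hb hs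
    _ ≤ (C * b ^ (-(d / (2 * p)) : ℝ)) ^ 2 * D := by
        gcongr
        exact hD i j hi hj hij
    _ = C ^ 2 * D * b ^ (-d / p : ℝ) := by
        rw [mul_pow, ← rpow_mul_natCast hb.le, mul_right_comm]
        congr 2
        push_cast
        ring

lemma card_filter_dist_le (n i B : ℕ) :
    ((Finset.Icc 1 n).filter fun j => 1 ≤ Nat.dist i j ∧ Nat.dist i j ≤ B).card ≤ 2 * B := by
  have hsub : ((Finset.Icc 1 n).filter fun j => 1 ≤ Nat.dist i j ∧ Nat.dist i j ≤ B) ⊆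
      (Finset.Icc (i - B) (i + B)).erase i := fun j hj => by
    have := (Finset.mem_filter.mp hj).2
    simp only [Finset.mem_erase, Finset.mem_Icc, Nat.dist] at this ⊢
    omega
  refine (Finset.card_le_card hsub).trans ?_
  rw [Finset.card_erase_of_mem (by simp), Nat.card_Icc]
  omega

lemma abs_sum_near_diagonal_le {a : ℕ → ℕ → ℝ} {T : ℝ}
    (ha : ∀ i j, 1 ≤ i → 1 ≤ j → i ≠ j → |a i j| ≤ T) (n B : ℕ) :
    |∑ i ∈ Finset.Icc 1 n, ∑ j ∈ Finset.Icc 1 n,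
      if 1 ≤ Nat.dist i j ∧ Nat.dist i j ≤ B then a i j else 0| ≤ 2 * T * (n * B) := by
  have hT : 0 ≤ T := (abs_nonneg _).trans (ha 1 2 le_rfl one_le_two (by decide))
  have hrow : ∀ i ∈ Finset.Icc 1 n, |∑ j ∈ Finset.Icc 1 n,
      if 1 ≤ Nat.dist i j ∧ Nat.dist i j ≤ B then a i j else 0| ≤ (2 * B : ℕ) * T := fun i hi => by
    rw [← Finset.sum_filter]
    refine (Finset.abs_sum_le_sum_abs _ _).trans ((Finset.sum_le_card_nsmul _ _ T ?_).trans ?_)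
    · intro j hj
      obtain ⟨hj, hdist, -⟩ := Finset.mem_filter.mp hj
      exact ha i j (Finset.mem_Icc.mp hi).1 (Finset.mem_Icc.mp hj).1
        (by rintro rfl; simp [Nat.dist_self] at hdist)
    · rw [nsmul_eq_mul]
      gcongr
      exact card_filter_dist_le n i B
  refine (Finset.abs_sum_le_sum_abs _ _).trans
    ((Finset.sum_le_card_nsmul _ _ _ hrow).trans_eq ?_)
  rw [Nat.card_Icc, nsmul_eq_mul, Nat.add_sub_cancel]
  push_cast
  ring

end NearDiagonalSum

end NearDiagonalCovariance

open NearDiagonalCovariance in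
theorem near_diagonal_cov_sum_bound_general {Ω : Type*} [MeasurableSpace Ω]
    (P : Measure Ω) [IsFiniteMeasure P] (d : ℕ)
    (X : ℕ → Ω → (Fin d → ℝ)) (hmeas : ∀ i, Measurable (X i))
    (f : (Fin d → ℝ) → ℝ)
    (hlaw : ∀ i : ℕ, 1 ≤ i →
      Measure.map (X i) P = volume.withDensity fun x => ENNReal.ofReal (f x))
    (hsupp : ∀ x, x ∉ Sd d → f x = 0)
    (p : ℝ) (hp : 1 < p) (hA2 : AssumpA2 P X f p)
    (s : Fin d → ℝ) (hs : s ∈ SdInt d)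
    (b : ℕ → ℝ) (hb : Tendsto b atTop (𝓝[>] 0)) (β : ℕ → ℕ) :
    (fun n : ℕ => ∑ i ∈ Finset.Icc 1 n, ∑ j ∈ Finset.Icc 1 n,
        if 1 ≤ Nat.dist i j ∧ Nat.dist i j ≤ β n then
          cov P (fun ω => kappa d s (b n) (X i ω)) (fun ω => kappa d s (b n) (X j ω))
        else 0)
      =O[atTop] (fun n : ℕ => (n : ℝ) * (β n : ℝ) * (b n) ^ (-(d : ℝ) / p)) := by
  obtain ⟨C, hC⟩ := exists_abs_cov_kappa_le hmeas hlaw hsupp hp hA2 hs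
  refine .of_bound (2 * C) ?_
  filter_upwards [hb.eventually hC, hb.eventually self_mem_nhdsWithin] with n hcov (hb : 0 < b n)
  rw [norm_eq_abs, norm_of_nonneg (by positivity)]
  exact (abs_sum_near_diagonal_le hcov n (β n)).trans_eq (by ring)

/-- Near-diagonal covariance sum bound `|C_{1,n}| ≪_s n β_n b^{-d/p}`. -/
theorem near_diagonal_cov_sum_bound {Ω : Type*} [MeasurableSpace Ω]
    (P : Measure Ω) [IsProbabilityMeasure P] (d : ℕ) (hd : 1 ≤ d)
    (X : ℕ → Ω → (Fin d → ℝ)) (hmeas : ∀ i, Measurable (X i))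
    (hval : ∀ i ω, X i ω ∈ Sd d)
    (hstat : IsStrictlyStationary P X)
    (f : (Fin d → ℝ) → ℝ)
    (hlaw : ∀ i : ℕ, 1 ≤ i →
      Measure.map (X i) P = volume.withDensity fun x => ENNReal.ofReal (f x))
    (hsupp : ∀ x, x ∉ Sd d → f x = 0)
    (p q : ℝ) (hp : 2 < p) (hq1 : 1 < q) (hq2 : q < 2) (hpq : 1 / p + 1 / q = 1)
    (hA2 : AssumpA2 P X f p)
    (s : Fin d → ℝ) (hs : s ∈ SdInt d)
    (b : ℕ → ℝ) (hbpos : ∀ n, 0 < b n) (hb0 : Tendsto b atTop (𝓝 0))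
    (β : ℕ → ℕ) (hβ : ∀ n : ℕ, 2 ≤ n → 1 ≤ β n ∧ β n ≤ n - 1) :
    (fun n : ℕ => ∑ i ∈ Finset.Icc 1 n, ∑ j ∈ Finset.Icc 1 n,
        if 1 ≤ Nat.dist i j ∧ Nat.dist i j ≤ β n then
          cov P (fun ω => kappa d s (b n) (X i ω)) (fun ω => kappa d s (b n) (X j ω))
        else 0)
      =O[atTop] (fun n : ℕ => (n : ℝ) * (β n : ℝ) * (b n) ^ (-(d : ℝ) / p)) :=
  near_diagonal_cov_sum_bound_general P d X hmeas f hlaw hsupp p (by linarith) hA2 s hs b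
    (tendsto_nhdsWithin_iff.mpr ⟨hb0, .of_forall hbpos⟩) β
end
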